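/- (Inverse theorem) Assume f satisfies (A1)–(A3) and fix χ > 0. There is ε₀ > 0 such that for all 0 < ε < ε₀ the following holds. Let 𝔄 be a countable family of ε-charts satisfying: (discreteness) for all t > 0 the set {Ψ_{x̂}^p ∈ 𝔄 : p > t} is finite; (relevance) for every v ∈ 𝔄 there is an ε-gpo w ∈ 𝔄^ℤ with w₀ = v that shadows a point of NUE*_χ. Let Σ, σ, Σ^# be as below and let π : Σ → M̂ assign to each ε-gpo the unique point of M̂ it shadows. If {Ψ_{x̂_n}^{p_n}}_{n∈ℤ}, {Ψ_{ŷ_n}^{q_n}}_{n∈ℤ} ∈ Σ^# satisfy π[{Ψ_{x̂_n}^{p_n}}] = π[{Ψ_{ŷ_n}^{q_n}}], then for all n ∈ ℤ: (1) d(ϑ[x̂_n], ϑ[ŷ_n]) ≤ 2 max{p_n, q_n}; (2) e^{−2√ε} ≤ u(x̂_n)/u(ŷ_n) ≤ e^{2√ε}; (3) e^{−ε^{1/3}} ≤ Q_ε(x̂_n)/Q_ε(ŷ_n) ≤ e^{ε^{1/3}}; (4) e^{−ε^{1/3}} ≤ p_n/q_n ≤ e^{ε^{1/3}}; (5) for t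 ∈ [−10Q_ε(x̂_n), 10Q_ε(x̂_n)] one has (Ψ_{ŷ_n}^{−1} ∘ Ψ_{x̂_n})(t) = t + Δ_n(t) + δ_n, where δ_n ∈ ℝ with |δ_n| < 3q_n and Δ_n is a linear function with Δ_n(0) = 0 and sup |dΔ_n| < 4√ε. -/

import Mathlib

open Real MeasureTheory Filter Topology Metric Set

noncomputable section

namespace OneDim

/-- The interval `M = [0, 1/2]`. -/
def Mset : Set ℝ := Set.Icc 0 (1/2)

/-- Data of a piecewise `C^{1+β}` interval map `f : M → M` with discontinuity set `D`,
constants `β ∈ (0,1)`, `a, K > 1`, radius function `r` and inverse branches `g`. -/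
structure GoodMap where
  f : ℝ → ℝ
  D : Set ℝ
  β : ℝ
  a : ℝ
  K : ℝ
  r : ℝ → ℝ
  g : ℝ → ℝ → ℝ
  hβ0 : 0 < β
  hβ1 : β < 1
  ha : 1 < a
  hK : 1 < K
  hmaps : ∀ x ∈ Mset, f x ∈ Mset
  hD : D ⊆ Mset
  hdiff : DifferentiableOn ℝ f (Mset \ D)

namespace GoodMap

/-- The critical set `C = {x ∈ M \ D : df_x = 0}`. -/
def crit (F : GoodMap) : Set ℝ := {x | x ∈ Mset \ F.D ∧ deriv F.f x = 0}

/-- The singular set `S = C ∪ D`. -/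
def S (F : GoodMap) : Set ℝ := F.crit ∪ F.D

/-- Distance to the singular set. -/
def dS (F : GoodMap) (x : ℝ) : ℝ := Metric.infDist x F.S

/-- Conditions (A1)–(A3). -/
def SatA (F : GoodMap) : Prop :=
  ∀ x ∈ Mset, x ∉ F.S → F.f x ∉ F.S →
    (min (F.dS x ^ F.a) (F.dS (F.f x) ^ F.a) < F.r x ∧ F.r x < 1) ∧
    -- (A1)
    (Set.InjOn F.f (Metric.ball x (2 * F.r x)) ∧
      (∀ y ∈ Metric.ball x (2 * F.r x), DifferentiableAt ℝ F.f y) ∧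
      F.g x (F.f x) = x ∧
      (∀ z ∈ Metric.ball (F.f x) (2 * F.r x), F.f (F.g x z) = z) ∧
      Set.InjOn (F.g x) (Metric.ball (F.f x) (2 * F.r x)) ∧
      (∀ z ∈ Metric.ball (F.f x) (2 * F.r x), DifferentiableAt ℝ (F.g x) z)) ∧
    -- (A2)
    ((∀ y ∈ Metric.ball x (2 * F.r x),
        F.dS x ^ F.a ≤ |deriv F.f y| ∧ |deriv F.f y| ≤ F.dS x ^ (-F.a)) ∧
      (∀ z ∈ Metric.ball (F.f x) (2 * F.r x),
        F.dS x ^ F.a ≤ |deriv (F.g x) z| ∧ |deriv (F.g x) z| ≤ F.dS x ^ (-F.a))) ∧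
    -- (A3)
    ((∀ y ∈ Metric.ball x (2 * F.r x), ∀ z ∈ Metric.ball x (2 * F.r x),
        |deriv F.f y - deriv F.f z| ≤ F.K * |y - z| ^ F.β) ∧
      (∀ y ∈ Metric.ball (F.f x) (2 * F.r x), ∀ z ∈ Metric.ball (F.f x) (2 * F.r x),
        |deriv (F.g x) y - deriv (F.g x) z| ≤ F.K * |y - z| ^ F.β))

end GoodMap

/-- Membership in the natural extension space `M̂`. -/
def inMhat (f : ℝ → ℝ) (x : ℤ → ℝ) : Prop :=
  (∀ n, x n ∈ Mset) ∧ ∀ n : ℤ, f (x (n - 1)) = x n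

/-- The natural extension map `f̂` (left shift). -/
def fhat (x : ℤ → ℝ) : ℤ → ℝ := fun n => x (n + 1)

/-- Iterate `f̂^k` of the natural extension map, `k ∈ ℤ`. -/
def fhatI (k : ℤ) (x : ℤ → ℝ) : ℤ → ℝ := fun n => x (n + k)

/-- The metric `d̂(x̂,ŷ) = sup{2^n d(x_n,y_n) : n ≤ 0}` on `M̂`. -/
def dhat (x y : ℤ → ℝ) : ℝ :=
  sSup {t : ℝ | ∃ n : ℤ, n ≤ 0 ∧ t = (2:ℝ) ^ n * |x n - y n|}

/-- The invertible derivative cocycle `d̂f^{(n)}` over `f̂`. -/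
def dfhat (f : ℝ → ℝ) (x : ℤ → ℝ) (n : ℤ) : ℝ :=
  if 0 ≤ n then ∏ j ∈ Finset.range n.toNat, deriv f (x (j : ℤ))
  else (∏ j ∈ Finset.range (-n).toNat, deriv f (x (-(j : ℤ) - 1)))⁻¹

/-- The Pesin parameter `u(x̂)`. -/
def uPes (f : ℝ → ℝ) (χ : ℝ) (x : ℤ → ℝ) : ℝ :=
  Real.sqrt (∑' n : ℕ, Real.exp (2 * (n:ℝ) * χ) * (dfhat f x (-(n:ℤ))) ^ 2)

/-- The Pesin chart `Ψ_{x̂}(t) = t/u(x̂) + x₀`. -/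
def Psi (f : ℝ → ℝ) (χ : ℝ) (x : ℤ → ℝ) (t : ℝ) : ℝ := t / uPes f χ x + x 0

/-- The set `NUE_χ`. -/
def NUE (F : GoodMap) (χ : ℝ) : Set (ℤ → ℝ) :=
  {x | inMhat F.f x ∧ (∀ n, x n ∉ F.S) ∧
    (∃ l > χ, Tendsto (fun n : ℕ => Real.log |dfhat F.f x (n:ℤ)| / (n:ℝ)) atTop (𝓝 l)) ∧
    (∃ l > χ, Tendsto (fun n : ℕ => Real.log |dfhat F.f x (-(n:ℤ))| / (-(n:ℝ))) atTop (𝓝 l))}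

/-- `ρ(x̂) = d({x₋₁,x₀,x₁}, S)`. -/
def rho (F : GoodMap) (x : ℤ → ℝ) : ℝ :=
  min (F.dS (x (-1))) (min (F.dS (x 0)) (F.dS (x 1)))

/-- `I_ε = {e^{-εn/3} : n ≥ 0}`. -/
def Ieps (ε : ℝ) : Set ℝ := {q | ∃ n : ℕ, q = Real.exp (-(ε * n) / 3)}

/-- `Q̃_ε(x̂)`. -/
def Qtilde (F : GoodMap) (χ ε : ℝ) (x : ℤ → ℝ) : ℝ :=
  ε ^ (3 / F.β) *
    min (uPes F.f χ x ^ (-(24 / F.β)))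
      (uPes F.f χ (fhatI (-1) x) ^ (-(12 / F.β)) * rho F x ^ (72 * F.a / F.β))

/-- `Q_ε(x̂) = max{q ∈ I_ε : q ≤ Q̃_ε(x̂)}`. -/
def Qeps (F : GoodMap) (χ ε : ℝ) (x : ℤ → ℝ) : ℝ :=
  sSup {q | q ∈ Ieps ε ∧ q ≤ Qtilde F χ ε x}

/-- The regular set. -/
def Reg (F : GoodMap) : Set (ℤ → ℝ) :=
  {x | inMhat F.f x ∧ (∀ n, x n ∉ F.S) ∧
    Tendsto (fun n : ℕ => Real.log (F.dS (x (n:ℤ))) / (n:ℝ)) atTop (𝓝 0) ∧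
    Tendsto (fun n : ℕ => Real.log (F.dS (x (-(n:ℤ)))) / (n:ℝ)) atTop (𝓝 0)}

/-- The set `NUE*_χ`. -/
def NUEstar (F : GoodMap) (χ : ℝ) : Set (ℤ → ℝ) :=
  {x | x ∈ NUE F χ ∧ x ∈ Reg F ∧
    (∃ nk : ℕ → ℤ, Tendsto nk atTop atBot ∧
      Tendsto (fun k => uPes F.f χ (fhatI (nk k) x)) atTop (𝓝 (uPes F.f χ x))) ∧
    Tendsto (fun n : ℕ => Real.log (uPes F.f χ (fhatI (-(n:ℤ)) x)) / (-(n:ℝ))) atTop (𝓝 0)}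

/-- An ε-chart is a pair `(x̂, p)`, representing `Ψ_{x̂}` restricted to `[-p,p]`. -/
structure Chart where
  x : ℤ → ℝ
  p : ℝ

/-- `(x̂, p)` is a genuine ε-chart. -/
def IsChart (F : GoodMap) (χ ε : ℝ) (c : Chart) : Prop :=
  c.x ∈ NUE F χ ∧ 0 < c.p ∧ c.p ≤ Qeps F χ ε c.x

/-- ε-overlap of two ε-charts. -/
def Overlap (F : GoodMap) (χ ε : ℝ) (c₁ c₂ : Chart) : Prop :=
  Real.exp (-ε) ≤ c₁.p / c₂.p ∧ c₁.p / c₂.p ≤ Real.exp ε ∧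
  |c₁.x 0 - c₂.x 0| + |(uPes F.f χ c₁.x)⁻¹ - (uPes F.f χ c₂.x)⁻¹| < (c₁.p * c₂.p) ^ 4

/-- `g_{x̂} = g_{x₋₁}`, the inverse branch of `f` taking `x₀` to `x₋₁`. -/
def ghat (F : GoodMap) (x : ℤ → ℝ) : ℝ → ℝ := F.g (x (-1))

/-- `G_{x̂} = Ψ_{f̂⁻¹x̂}⁻¹ ∘ g_{x̂} ∘ Ψ_{x̂}`. -/
def Gmap (F : GoodMap) (χ : ℝ) (x : ℤ → ℝ) (t : ℝ) : ℝ :=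
  uPes F.f χ (fhatI (-1) x) * (ghat F x (Psi F.f χ x t) - x (-1))

/-- `G_{x̂,ŷ} = Ψ_{ŷ}⁻¹ ∘ g_{x̂} ∘ Ψ_{x̂}`. -/
def Gmap2 (F : GoodMap) (χ : ℝ) (x y : ℤ → ℝ) (t : ℝ) : ℝ :=
  uPes F.f χ y * (ghat F x (Psi F.f χ x t) - y 0)

/-- `F_{x̂} = Ψ_{f̂x̂}⁻¹ ∘ f ∘ Ψ_{x̂}`. -/
def Fmap (F : GoodMap) (χ : ℝ) (x : ℤ → ℝ) (t : ℝ) : ℝ :=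
  uPes F.f χ (fhat x) * (F.f (Psi F.f χ x t) - x 1)

/-- `δ_ε = e^{-εn}` where `n` is the unique positive integer with `e^{-εn} < ε ≤ e^{-ε(n-1)}`. -/
def deltaEps (ε : ℝ) : ℝ :=
  Real.exp (-(ε * ((⌊Real.log (1 / ε) / ε⌋ + 1 : ℤ) : ℝ)))

/-- Weak edge `v ⤎ w` (from `w = Ψ_{x̂}^p` to `v = Ψ_{ŷ}^q`). -/
def WeakEdge (F : GoodMap) (χ ε : ℝ) (v w : Chart) : Prop :=
  IsChart F χ ε v ∧ IsChart F χ ε w ∧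
  Overlap F χ ε ⟨fhatI (-1) w.x, v.p⟩ v ∧
  w.p ≤ Real.exp ε * v.p

/-- Edge `v ← w` (from `w = Ψ_{x̂}^p` to `v = Ψ_{ŷ}^q`). -/
def Edge (F : GoodMap) (χ ε : ℝ) (v w : Chart) : Prop :=
  IsChart F χ ε v ∧ IsChart F χ ε w ∧
  Overlap F χ ε ⟨fhatI (-1) w.x, v.p⟩ v ∧
  |v.x 1 - w.x 0| < v.p ∧
  Real.exp (-v.p) ≤ uPes F.f χ (fhat v.x) / uPes F.f χ w.x ∧
  uPes F.f χ (fhat v.x) / uPes F.f χ w.x ≤ Real.exp v.p ∧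
  w.p = min (Real.exp ε * v.p) (deltaEps ε * Qeps F χ ε w.x)

/-- ε-generalized pseudo-orbit. -/
def IsGPO (F : GoodMap) (χ ε : ℝ) (v : ℤ → Chart) : Prop :=
  ∀ n : ℤ, Edge F χ ε (v n) (v (n + 1))

/-- weak ε-generalized pseudo-orbit. -/
def IsWeakGPO (F : GoodMap) (χ ε : ℝ) (v : ℤ → Chart) : Prop :=
  ∀ n : ℤ, WeakEdge F χ ε (v n) (v (n + 1))

/-- The range `Ψ_{x̂}([-p,p])` of an ε-chart. -/
def chartRange (F : GoodMap) (χ : ℝ) (c : Chart) : Set ℝ :=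
  Psi F.f χ c.x '' Set.Icc (-c.p) c.p

/-- A bi-infinite sequence of ε-charts shadows `x̂ ∈ M̂`. -/
def Shadows (F : GoodMap) (χ : ℝ) (v : ℤ → Chart) (x : ℤ → ℝ) : Prop :=
  inMhat F.f x ∧ ∀ n : ℤ, x n ∈ chartRange F χ (v n)

/-- `q_ε(x̂) = δ_ε inf{e^{ε|m|} Q_ε(f̂^m x̂) : m ≤ 0}`. -/
def qeps (F : GoodMap) (χ ε : ℝ) (x : ℤ → ℝ) : ℝ :=
  deltaEps ε *
    sInf {t : ℝ | ∃ m : ℤ, m ≤ 0 ∧ t = Real.exp (ε * |(m:ℝ)|) * Qeps F χ ε (fhatI m x)}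

/-- Recurrence: some symbol repeats infinitely often in the future and some in the past. -/
def Recurrent {V : Type*} (v : ℤ → V) : Prop :=
  (∃ c, {n : ℤ | 0 < n ∧ v n = c}.Infinite) ∧ ∃ c, {n : ℤ | n < 0 ∧ v n = c}.Infinite

/-- The distance `d(v,w) = exp(-min{|n| : v_n ≠ w_n})` on sequence spaces. -/
def dSigma {V : Type*} (v w : ℤ → V) : ℝ :=
  sSup {t : ℝ | ∃ n : ℤ, v n ≠ w n ∧ t = Real.exp (-|(n:ℝ)|)}

/-- Sup norm over a set. -/
def supNorm (h : ℝ → ℝ) (I : Set ℝ) : ℝ := sSup ((fun t => |h t|) '' I)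

/-- Hölder constant over a set. -/
def holConst (γ : ℝ) (h : ℝ → ℝ) (I : Set ℝ) : ℝ :=
  sSup {r : ℝ | ∃ t ∈ I, ∃ s ∈ I, t ≠ s ∧ r = |h t - h s| / |t - s| ^ γ}

/-!
The number `u(f̂ⁿẑ)²` solves the recursion `U n = 1 + a n * U (n - 1)` with
`a n = e^{2χ} / f'(zₙ₋₁)²`. If a pseudo-orbit shadows `ẑ`, the values `u(x̂ₙ)²` of its centres solve
the same recursion up to an additive error `ε`, because the size of a chart is a high power of all
the scales on which `f'` and `u` vary. They are thus a supersolution with constant `1 - ε` and a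
subsolution with constant `1 + ε`. Supersolutions dominate the series defining `u`; a subsolution
is dominated by it as soon as it returns to some fixed value infinitely often in the past. Hence
`u(x̂ₙ)`, and with it `Q(x̂ₙ)`, is determined by `ẑ` up to a factor `e^{O(ε)}`.

The sizes solve `pₙ = min (e^ε pₙ₋₁) (δ_ε Q(x̂ₙ))`. By recurrence the second term is attained at
arbitrarily negative times, since otherwise `p` would be strictly increasing in the past; so two
solutions compare as well as their data `Q` do. The change of charts is affine.
-/

/-! ### Logarithmic closeness -/

/-- `a` and `b` are positive and agree up to a factor `e^{±θ}`. Positivity is part of the notion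
because `Real.log` is junk on nonpositive numbers. -/
structure LogClose (θ a b : ℝ) : Prop where
  left_pos : 0 < a
  right_pos : 0 < b
  abs_log_sub_le : |log a - log b| ≤ θ

namespace LogClose

variable {θ θ' a b c d : ℝ}

theorem symm (h : LogClose θ a b) : LogClose θ b a :=
  ⟨h.right_pos, h.left_pos, abs_sub_comm (log a) (log b) ▸ h.abs_log_sub_le⟩

theorem trans (h : LogClose θ a b) (h' : LogClose θ' b c) : LogClose (θ + θ') a c :=
  ⟨h.left_pos, h'.right_pos,
    (abs_sub_le _ _ _).trans (add_le_add h.abs_log_sub_le h'.abs_log_sub_le)⟩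

theorem mono (h : LogClose θ a b) (hθ : θ ≤ θ') : LogClose θ' a b :=
  ⟨h.left_pos, h.right_pos, h.abs_log_sub_le.trans hθ⟩

theorem div (h : LogClose θ a b) (h' : LogClose θ' c d) : LogClose (θ + θ') (a / c) (b / d) := by
  refine ⟨div_pos h.left_pos h'.left_pos, div_pos h.right_pos h'.right_pos, ?_⟩
  rw [log_div h.left_pos.ne' h'.left_pos.ne', log_div h.right_pos.ne' h'.right_pos.ne',
    sub_sub_sub_comm]
  exact (abs_sub _ _).trans (add_le_add h.abs_log_sub_le h'.abs_log_sub_le)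

theorem mul (h : LogClose θ a b) (h' : LogClose θ' c d) : LogClose (θ + θ') (a * c) (b * d) := by
  refine ⟨mul_pos h.left_pos h'.left_pos, mul_pos h.right_pos h'.right_pos, ?_⟩
  rw [log_mul h.left_pos.ne' h'.left_pos.ne', log_mul h.right_pos.ne' h'.right_pos.ne',
    add_sub_add_comm]
  exact (abs_add_le _ _).trans (add_le_add h.abs_log_sub_le h'.abs_log_sub_le)

theorem const_mul (h : LogClose θ a b) (hc : 0 < c) : LogClose θ (c * a) (c * b) := by
  refine ⟨mul_pos hc h.left_pos, mul_pos hc h.right_pos, ?_⟩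
  rw [log_mul hc.ne' h.left_pos.ne', log_mul hc.ne' h.right_pos.ne', add_sub_add_left_eq_sub]
  exact h.abs_log_sub_le

theorem rpow (h : LogClose θ a b) (e : ℝ) : LogClose (|e| * θ) (a ^ e) (b ^ e) := by
  refine ⟨rpow_pos_of_pos h.left_pos e, rpow_pos_of_pos h.right_pos e, ?_⟩
  rw [log_rpow h.left_pos, log_rpow h.right_pos, ← mul_sub, abs_mul]
  exact mul_le_mul_of_nonneg_left h.abs_log_sub_le (abs_nonneg e)

theorem inv (h : LogClose θ a b) : LogClose θ a⁻¹ b⁻¹ := by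
  simpa only [rpow_neg_one, abs_neg, abs_one, one_mul] using h.rpow (-1)

theorem sq (h : LogClose θ a b) : LogClose (2 * θ) (a ^ 2) (b ^ 2) := by
  simpa only [rpow_two, abs_two] using h.rpow 2

theorem of_sq (h : LogClose (2 * θ) (a ^ 2) (b ^ 2)) (ha : 0 < a) (hb : 0 < b) :
    LogClose θ a b := by
  refine ⟨ha, hb, ?_⟩
  have hlog := h.abs_log_sub_le
  rw [log_pow, log_pow, ← mul_sub, abs_mul] at hlog
  simpa using hlog

theorem min (h : LogClose θ a b) (h' : LogClose θ c d) :
    LogClose θ (Min.min a c) (Min.min b d) := by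
  refine ⟨lt_min h.left_pos h'.left_pos, lt_min h.right_pos h'.right_pos, ?_⟩
  rw [strictMonoOn_log.monotoneOn.map_min h.left_pos h'.left_pos,
    strictMonoOn_log.monotoneOn.map_min h.right_pos h'.right_pos]
  exact (abs_min_sub_min_le_max _ _ _ _).trans (max_le h.abs_log_sub_le h'.abs_log_sub_le)

theorem le_exp_mul (h : LogClose θ a b) : a ≤ exp θ * b := by
  rw [← log_le_log_iff h.left_pos (mul_pos (exp_pos θ) h.right_pos),
    log_mul (exp_pos θ).ne' h.right_pos.ne', log_exp]
  linarith [(abs_le.1 h.abs_log_sub_le).2]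

theorem of_le_exp_mul (ha : 0 < a) (hb : 0 < b) (hab : a ≤ exp θ * b) (hba : b ≤ exp θ * a) :
    LogClose θ a b := by
  rw [← log_le_log_iff ha (by positivity), log_mul (exp_pos θ).ne' hb.ne', log_exp] at hab
  rw [← log_le_log_iff hb (by positivity), log_mul (exp_pos θ).ne' ha.ne', log_exp] at hba
  exact ⟨ha, hb, abs_le.2 ⟨by linarith, by linarith⟩⟩

theorem div_le_exp (h : LogClose θ a b) : a / b ≤ exp θ :=
  (div_le_iff₀ h.right_pos).2 h.le_exp_mul

theorem exp_neg_le_div (h : LogClose θ a b) : exp (-θ) ≤ a / b := by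
  rw [exp_neg, ← inv_div]
  exact inv_anti₀ (div_pos h.right_pos h.left_pos) h.symm.div_le_exp

theorem of_abs_sub_le (ha : 0 < a) (hθ : θ ≤ 1 / 2) (hab : |a - b| ≤ θ * a) :
    LogClose (2 * θ) a b := by
  obtain ⟨hlow, hupp⟩ := abs_le.1 hab
  have hb : 0 < b := by nlinarith
  have hθ0 : 0 ≤ θ := nonneg_of_mul_nonneg_left ((abs_nonneg _).trans hab) ha
  have hlog (x y : ℝ) (hx : 0 < x) (hy : 0 < y) : log x - log y ≤ x / y - 1 :=
    log_div hx.ne' hy.ne' ▸ log_le_sub_one_of_pos (div_pos hx hy)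
  have hba : b / a ≤ 1 + θ := (div_le_iff₀ ha).2 (by linarith)
  have hab' : a / b ≤ 1 + 2 * θ := by
    rw [div_le_iff₀ hb]
    nlinarith [mul_nonneg hθ0 ha.le]
  exact ⟨ha, hb, abs_le.2 ⟨by linarith [hlog b a hb ha], by linarith [hlog a b ha hb]⟩⟩

theorem abs_div_sub_one_le (h : LogClose θ a b) (hθ : θ ≤ 1) : |a / b - 1| ≤ 2 * θ := by
  have hexp : a / b = exp (log a - log b) := by
    rw [exp_sub, exp_log h.left_pos, exp_log h.right_pos]
  rw [hexp]
  exact (abs_exp_sub_one_le (h.abs_log_sub_le.trans hθ)).trans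
    (by linarith [h.abs_log_sub_le])

theorem abs_sub_le (h : LogClose θ a b) (hθ : θ ≤ 1) : |a - b| ≤ 2 * θ * b := by
  have hb := h.right_pos
  calc |a - b| = |a / b - 1| * b := by
        rw [← abs_of_pos hb, ← abs_mul, abs_of_pos hb, sub_mul, div_mul_cancel₀ _ hb.ne', one_mul]
    _ ≤ 2 * θ * b := mul_le_mul_of_nonneg_right (h.abs_div_sub_one_le hθ) hb.le

end LogClose

/-! ### Recursions that are recurrent in the past -/

/-- Some symbol is used infinitely often in the past. -/
def PastRecurrent {V : Type*} (v : ℤ → V) : Prop :=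
  ∃ c, ∃ᶠ n in atBot, v n = c

theorem Recurrent.pastRecurrent {V : Type*} {v : ℤ → V} (hv : Recurrent v) : PastRecurrent v := by
  obtain ⟨c, hc⟩ := hv.2
  refine ⟨c, ?_⟩
  have hcof : ∃ᶠ n in cofinite, n < 0 ∧ v n = c := frequently_cofinite_iff_infinite.2 hc
  rw [Int.cofinite_eq, frequently_sup] at hcof
  rcases hcof with hbot | htop
  · exact hbot.mono fun _ h => h.2
  · obtain ⟨n, hn, hpos⟩ := (htop.and_eventually (eventually_ge_atTop 0)).exists
    omega

theorem PastRecurrent.comp {V W : Type*} {v : ℤ → V} (hv : PastRecurrent v) (φ : V → W) :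
    PastRecurrent fun n => φ (v n) :=
  let ⟨c, hc⟩ := hv
  ⟨φ c, hc.mono fun _ h => congrArg φ h⟩

section Comparison

variable {N : ℤ} {δ m c L : ℝ} {R a X U P P' q q' : ℤ → ℝ}

theorem eventually_atBot_lt_pred_add (hR : MonotoneOn R (Iic N)) (hm : ∀ n ≤ N, m ≤ R n)
    (hδ : 0 < δ) : ∀ᶠ n in atBot, R n < R (n - 1) + δ := by
  have hne : (R '' Iic N).Nonempty := ⟨R N, N, self_mem_Iic, rfl⟩
  have hbdd : BddBelow (R '' Iic N) := ⟨m, forall_mem_image.2 fun n hn => hm n hn⟩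
  obtain ⟨_, ⟨k, hk, rfl⟩, hlt⟩ :=
    exists_lt_of_csInf_lt hne (lt_add_of_pos_right (sInf (R '' Iic N)) hδ)
  filter_upwards [eventually_le_atBot k] with n hn
  have hnN : n ≤ N := hn.trans hk
  calc R n ≤ R k := hR hnN hk hn
    _ < sInf (R '' Iic N) + δ := hlt
    _ ≤ R (n - 1) + δ :=
      add_le_add_left (csInf_le hbdd ⟨n - 1, mem_Iic.2 (by omega), rfl⟩) δ

theorem mul_one_sub_div_le_div_sub_div {c a u u' x x' : ℝ} (hu' : 0 ≤ u') (hx : 0 < x)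
    (hx' : 0 < x') (hu : c + a * u' ≤ u) (hxx' : x ≤ c + a * x') :
    c * (1 - u' / x') / x ≤ u / x - u' / x' := by
  rw [div_le_iff₀ hx, sub_mul, div_mul_cancel₀ _ hx.ne']
  have hmul := mul_le_mul_of_nonneg_left hxx' (div_nonneg hu' hx'.le)
  have hcancel : u' / x' * (a * x') = a * u' := by field_simp
  linarith

/- If `U N < X N`, the ratio `U / X` stays below `1` in the past and is monotone there, with
increments bounded below at the infinitely many times where `X` takes its recurrent value. -/
theorem le_of_subsolution_of_supersolution (ha : ∀ n, 0 ≤ a n) (hc : 0 < c)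
    (hU : ∀ n, 0 ≤ U n) (hUsuper : ∀ n, c + a n * U (n - 1) ≤ U n)
    (hX : ∀ n, 0 < X n) (hXsub : ∀ n, X n ≤ c + a n * X (n - 1))
    (hrec : PastRecurrent X) (N : ℤ) : X N ≤ U N := by
  by_contra! hN
  have hlt : ∀ n ≤ N, U n < X n := by
    intro n hn
    induction n, hn using Int.leInductionDown with
    | base => exact hN
    | pred n _ ih =>
      by_contra! h
      linarith [hUsuper n, hXsub n, mul_le_mul_of_nonneg_left h (ha n)]
  set R : ℤ → ℝ := fun n => U n / X n
  have hR1 : ∀ n ≤ N, R n < 1 := fun n hn => (div_lt_one (hX n)).2 (hlt n hn)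
  have hstep (n : ℤ) : c * (1 - R (n - 1)) / X n ≤ R n - R (n - 1) :=
    mul_one_sub_div_le_div_sub_div (hU _) (hX n) (hX _) (hUsuper n) (hXsub n)
  have hmono : MonotoneOn R (Iic N) := by
    refine monotoneOn_of_pred_le ordConnected_Iic fun n _ _ hn => ?_
    rw [Order.pred_eq_sub_one] at hn ⊢
    refine sub_nonneg.1 (le_trans ?_ (hstep n))
    exact div_nonneg (mul_nonneg hc.le (sub_nonneg.2 (hR1 _ hn).le)) (hX n).le
  obtain ⟨b, hb⟩ := hrec
  have hb0 : 0 < b := hb.exists.choose_spec ▸ hX _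
  have hjump := eventually_atBot_lt_pred_add hmono (fun n _ => div_nonneg (hU n) (hX n).le)
    (div_pos (mul_pos hc (sub_pos.2 (hR1 N le_rfl))) hb0)
  obtain ⟨n, ⟨rfl, hsmall⟩, hn⟩ :=
    ((hb.and_eventually hjump).and_eventually (eventually_le_atBot N)).exists
  have hmono_n : R (n - 1) ≤ R N := hmono (mem_Iic.2 (by omega)) self_mem_Iic (by omega)
  have hstep_n : c * (1 - R N) / X n ≤ c * (1 - R (n - 1)) / X n := by gcongr
  linarith [hstep n]

theorem exists_le_eq_of_eq_min (hc : 1 < c) (hP : ∀ n, 0 < P n)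
    (hPq : ∀ n, P n = min (c * P (n - 1)) (q n)) (hrec : PastRecurrent P) (n : ℤ) :
    ∃ m ≤ n, P m = q m := by
  by_contra! hne
  have hmono : StrictMonoOn P (Iic n) := by
    refine strictMonoOn_of_pred_lt ordConnected_Iic fun m _ hm _ => ?_
    rw [Order.pred_eq_sub_one]
    have hmul : P m = c * P (m - 1) :=
      (min_choice _ _).elim (fun h => (hPq m).trans h) fun h => absurd ((hPq m).trans h) (hne m hm)
    rw [hmul]
    exact lt_mul_of_one_lt_left (hP _) hc
  obtain ⟨b, hb⟩ := hrec
  obtain ⟨k, hkn, hk⟩ := frequently_atBot'.1 hb n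
  obtain ⟨l, hlk, hl⟩ := frequently_atBot'.1 hb k
  exact (hmono (mem_Iic.2 (by omega)) (mem_Iic.2 (by omega)) hlk).ne (hl.trans hk.symm)

theorem le_mul_of_eq_min (hc : 1 < c) (hL : 0 ≤ L) (hP : ∀ n, 0 < P n)
    (hPq : ∀ n, P n = min (c * P (n - 1)) (q n)) (hrec : PastRecurrent P)
    (hPq' : ∀ n, P' n = min (c * P' (n - 1)) (q' n)) (hqq' : ∀ n, q' n ≤ L * q n) (n : ℤ) :
    P' n ≤ L * P n := by
  obtain ⟨m, hmn, hm⟩ := exists_le_eq_of_eq_min hc hP hPq hrec n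
  induction n, hmn using Int.leInduction with
  | base =>
    rw [hm]
    exact (hPq' m ▸ min_le_right _ _).trans (hqq' m)
  | succ n _ ih =>
    rw [hPq (n + 1), hPq' (n + 1), add_sub_cancel_right, mul_min_of_nonneg _ _ hL]
    refine min_le_min ?_ (hqq' _)
    calc c * P' n ≤ c * (L * P n) := by gcongr
      _ = L * (c * P n) := mul_left_comm _ _ _

end Comparison

/-! ### Distance to the singular set -/

namespace GoodMap

variable {F : GoodMap} {x y : ℝ}

theorem dS_nonneg (F : GoodMap) (x : ℝ) : 0 ≤ F.dS x := infDist_nonneg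

theorem S_subset_Mset (F : GoodMap) : F.S ⊆ Mset :=
  union_subset (fun _ h => h.1.1) F.hD

theorem dS_le_one (hx : x ∈ Mset) : F.dS x ≤ 1 := by
  rcases F.S.eq_empty_or_nonempty with hS | ⟨y, hy⟩
  · rw [dS, hS, infDist_empty]
    exact zero_le_one
  · refine (infDist_le_dist_of_mem hy).trans ((Real.dist_le_of_mem_Icc hx
      (F.S_subset_Mset hy)).trans ?_)
    norm_num

theorem abs_dS_sub_dS_le (F : GoodMap) (x y : ℝ) : |F.dS x - F.dS y| ≤ |x - y| := by
  simpa only [dS, Real.dist_eq, NNReal.coe_one, one_mul] using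
    (lipschitz_infDist_pt F.S).dist_le_mul x y

theorem deriv_ne_zero (hx : x ∈ Mset) (hS : x ∉ F.S) : deriv F.f x ≠ 0 := fun h =>
  hS (or_iff_not_imp_right.2 fun hD => ⟨⟨hx, hD⟩, h⟩)

namespace SatA

theorem radius_pos (hA : F.SatA) (hx : x ∈ Mset) (hS : x ∉ F.S) (hfS : F.f x ∉ F.S) :
    0 < F.r x :=
  (le_min (rpow_nonneg (F.dS_nonneg _) _) (rpow_nonneg (F.dS_nonneg _) _)).trans_lt
    (hA x hx hS hfS).1.1

theorem dS_pos (hA : F.SatA) (hx : x ∈ Mset) (hS : x ∉ F.S) (hfS : F.f x ∉ F.S) :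
    0 < F.dS x := by
  refine (F.dS_nonneg x).lt_of_ne fun h0 => deriv_ne_zero hx hS ?_
  obtain ⟨-, -, ⟨hderiv, -⟩, -⟩ := hA x hx hS hfS
  have hupper := (hderiv x (mem_ball_self (by linarith [hA.radius_pos hx hS hfS]))).2
  rw [← h0, zero_rpow (by linarith [F.ha])] at hupper
  exact abs_nonpos_iff.1 hupper

end SatA

end GoodMap

/-! ### The recursion for the Pesin parameter -/

/-- The general term of the series defining `u(x̂)²`. -/
def uTerm (f : ℝ → ℝ) (χ : ℝ) (x : ℤ → ℝ) (n : ℕ) : ℝ :=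
  exp (2 * (n : ℝ) * χ) * dfhat f x (-(n : ℤ)) ^ 2

/-- The coefficient in the recursion `u(x̂)² = 1 + pesinCoeff f χ x₋₁ * u(f̂⁻¹x̂)²`. -/
def pesinCoeff (f : ℝ → ℝ) (χ t : ℝ) : ℝ := exp (2 * χ) / deriv f t ^ 2

section PesinParameter

variable {f : ℝ → ℝ} {χ c : ℝ} {x z X : ℤ → ℝ}

theorem fhatI_neg_one_fhatI (n : ℤ) (z : ℤ → ℝ) : fhatI (-1) (fhatI n z) = fhatI (n - 1) z := by
  funext k
  simp only [fhatI]
  congr 1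
  ring

theorem fhatI_apply_neg_one (n : ℤ) (z : ℤ → ℝ) : fhatI n z (-1) = z (n - 1) := by
  rw [fhatI, neg_add_eq_sub]

theorem fhatI_apply_zero (n : ℤ) (z : ℤ → ℝ) : fhatI n z 0 = z n := by
  rw [fhatI, zero_add]

theorem fhatI_apply_one (n : ℤ) (z : ℤ → ℝ) : fhatI n z 1 = z (n + 1) := by
  rw [fhatI, add_comm]

theorem pesinCoeff_nonneg (f : ℝ → ℝ) (χ t : ℝ) : 0 ≤ pesinCoeff f χ t := by
  unfold pesinCoeff
  positivity

theorem dfhat_neg (f : ℝ → ℝ) (x : ℤ → ℝ) (n : ℕ) :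
    dfhat f x (-(n : ℤ)) = (∏ j ∈ Finset.range n, deriv f (x (-(j : ℤ) - 1)))⁻¹ := by
  rcases n.eq_zero_or_pos with rfl | hn
  · simp [dfhat]
  · rw [dfhat, if_neg (by omega), neg_neg, Int.toNat_natCast]

theorem uTerm_nonneg (f : ℝ → ℝ) (χ : ℝ) (x : ℤ → ℝ) (n : ℕ) : 0 ≤ uTerm f χ x n := by
  unfold uTerm
  positivity

theorem uTerm_zero (f : ℝ → ℝ) (χ : ℝ) (x : ℤ → ℝ) : uTerm f χ x 0 = 1 := by
  simp [uTerm, dfhat]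

theorem uTerm_succ (f : ℝ → ℝ) (χ : ℝ) (x : ℤ → ℝ) (n : ℕ) :
    uTerm f χ x (n + 1) = pesinCoeff f χ (x (-1)) * uTerm f χ (fhatI (-1) x) n := by
  have hexp : exp (2 * ((n + 1 : ℕ) : ℝ) * χ) = exp (2 * χ) * exp (2 * (n : ℝ) * χ) := by
    rw [← exp_add]
    push_cast
    ring_nf
  have hshift (j : ℕ) : fhatI (-1) x (-(j : ℤ) - 1) = x (-((j + 1 : ℕ) : ℤ) - 1) := by
    rw [fhatI]
    push_cast
    ring_nf
  simp only [uTerm, pesinCoeff, dfhat_neg, Finset.prod_range_succ', hexp, hshift, Nat.cast_zero,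
    neg_zero, zero_sub, mul_inv, mul_pow, inv_pow]
  ring

theorem uPes_nonneg (f : ℝ → ℝ) (χ : ℝ) (x : ℤ → ℝ) : 0 ≤ uPes f χ x := sqrt_nonneg _

theorem uPes_sq (f : ℝ → ℝ) (χ : ℝ) (x : ℤ → ℝ) : uPes f χ x ^ 2 = ∑' n, uTerm f χ x n :=
  sq_sqrt (tsum_nonneg (uTerm_nonneg f χ x))

theorem one_le_uPes (hx : Summable (uTerm f χ x)) : 1 ≤ uPes f χ x := by
  rw [← one_le_sq_iff₀ (uPes_nonneg f χ x), uPes_sq, ← uTerm_zero f χ x]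
  exact hx.le_tsum 0 fun n _ => uTerm_nonneg f χ x n

theorem uPes_sq_eq_one_add (hx : Summable (uTerm f χ x)) :
    uPes f χ x ^ 2 = 1 + pesinCoeff f χ (x (-1)) * uPes f χ (fhatI (-1) x) ^ 2 := by
  rw [uPes_sq, uPes_sq, hx.tsum_eq_zero_add, uTerm_zero]
  simp only [uTerm_succ, tsum_mul_left]

theorem summable_uTerm_fhatI_neg_one (hx : Summable (uTerm f χ x)) (hd : deriv f (x (-1)) ≠ 0) :
    Summable (uTerm f χ (fhatI (-1) x)) := by
  have hsucc := (summable_nat_add_iff 1).2 hx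
  simp only [uTerm_succ] at hsucc
  exact (summable_mul_left_iff (by unfold pesinCoeff; positivity)).1 hsucc

theorem mul_sum_uTerm_le (hX₀ : ∀ n, 0 ≤ X n)
    (hX : ∀ n, c + pesinCoeff f χ (z (n - 1)) * X (n - 1) ≤ X n) (N : ℕ) (n : ℤ) :
    c * ∑ j ∈ Finset.range N, uTerm f χ (fhatI n z) j ≤ X n := by
  induction N generalizing n with
  | zero => simpa using hX₀ n
  | succ N ih =>
    rw [Finset.sum_range_succ', uTerm_zero]
    simp only [uTerm_succ, fhatI_apply_neg_one, fhatI_neg_one_fhatI, ← Finset.mul_sum]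
    have := mul_le_mul_of_nonneg_left (ih (n - 1)) (pesinCoeff_nonneg f χ (z (n - 1)))
    linarith [hX n]

theorem summable_uTerm_of_supersolution (hc : 0 < c) (hX₀ : ∀ n, 0 ≤ X n)
    (hX : ∀ n, c + pesinCoeff f χ (z (n - 1)) * X (n - 1) ≤ X n) (n : ℤ) :
    Summable (uTerm f χ (fhatI n z)) :=
  summable_of_sum_range_le (uTerm_nonneg f χ _) fun N =>
    (le_div_iff₀' hc).2 (mul_sum_uTerm_le hX₀ hX N n)

theorem mul_uPes_sq_le_of_supersolution (hc : 0 < c) (hX₀ : ∀ n, 0 ≤ X n)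
    (hX : ∀ n, c + pesinCoeff f χ (z (n - 1)) * X (n - 1) ≤ X n) (n : ℤ) :
    c * uPes f χ (fhatI n z) ^ 2 ≤ X n := by
  rw [uPes_sq, ← le_div_iff₀' hc]
  exact tsum_le_of_sum_range_le (uTerm_nonneg f χ _) fun N =>
    (le_div_iff₀' hc).2 (mul_sum_uTerm_le hX₀ hX N n)

theorem le_mul_uPes_sq_of_subsolution (hz : ∀ n, Summable (uTerm f χ (fhatI n z))) (hc : 0 < c)
    (hX₀ : ∀ n, 0 < X n) (hX : ∀ n, X n ≤ c + pesinCoeff f χ (z (n - 1)) * X (n - 1))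
    (hrec : PastRecurrent X) (n : ℤ) : X n ≤ c * uPes f χ (fhatI n z) ^ 2 := by
  refine le_of_subsolution_of_supersolution (U := fun n => c * uPes f χ (fhatI n z) ^ 2)
    (fun n => pesinCoeff_nonneg f χ (z (n - 1))) hc
    (fun n => mul_nonneg hc.le (sq_nonneg _)) (fun n => le_of_eq ?_) hX₀ hX hrec n
  rw [uPes_sq_eq_one_add (hz n), fhatI_apply_neg_one, fhatI_neg_one_fhatI]
  ring

end PesinParameter

/-! ### The size of a Pesin chart -/

theorem summable_exp_mul_sq_of_tendsto_log {d : ℕ → ℝ} {χ l : ℝ} (hl : χ < l)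
    (hd : Tendsto (fun n : ℕ => log |d n| / (-(n : ℝ))) atTop (𝓝 l)) :
    Summable fun n : ℕ => exp (2 * (n : ℝ) * χ) * d n ^ 2 := by
  obtain ⟨m, hχm, hml⟩ := exists_between hl
  refine Summable.of_norm_bounded_eventually_nat (g := fun n => exp (-(2 * (m - χ))) ^ n)
    (summable_geometric_of_lt_one (exp_pos _).le (exp_lt_one_iff.2 (by linarith))) ?_
  filter_upwards [hd.eventually (lt_mem_nhds hml), eventually_gt_atTop 0] with n hn hn0
  have habs : |d n| ≤ exp (-(n * m)) := by
    rcases eq_or_ne (d n) 0 with h0 | h0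
    · rw [h0, abs_zero]
      positivity
    · rw [← log_le_iff_le_exp (abs_pos.2 h0)]
      rw [div_neg, lt_neg, div_lt_iff₀ (Nat.cast_pos.2 hn0)] at hn
      linarith
  rw [norm_of_nonneg (by positivity)]
  calc exp (2 * (n : ℝ) * χ) * d n ^ 2 = exp (2 * (n : ℝ) * χ) * |d n| ^ 2 := by rw [sq_abs]
    _ ≤ exp (2 * (n : ℝ) * χ) * exp (-(n * m)) ^ 2 := by gcongr
    _ = exp (-(2 * (m - χ))) ^ n := by
      rw [← exp_nat_mul, ← exp_nat_mul, ← exp_add]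
      push_cast
      ring_nf

theorem rho_le_one {F : GoodMap} {x : ℤ → ℝ} (hx : x 0 ∈ Mset) : rho F x ≤ 1 :=
  (min_le_right _ _).trans ((min_le_left _ _).trans (GoodMap.dS_le_one hx))

theorem rho_le_dS_zero (F : GoodMap) (x : ℤ → ℝ) : rho F x ≤ F.dS (x 0) :=
  (min_le_right _ _).trans (min_le_left _ _)

theorem rho_le_dS_one (F : GoodMap) (x : ℤ → ℝ) : rho F x ≤ F.dS (x 1) :=
  (min_le_right _ _).trans (min_le_right _ _)

namespace NUE

variable {F : GoodMap} {χ ε : ℝ} {x : ℤ → ℝ}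

theorem summable_uTerm (hx : x ∈ NUE F χ) : Summable (uTerm F.f χ x) :=
  let ⟨_, _, _, _, hl, hlim⟩ := hx
  summable_exp_mul_sq_of_tendsto_log hl hlim

theorem apply_eq (hx : x ∈ NUE F χ) (n : ℤ) : F.f (x n) = x (n + 1) := by
  simpa only [add_sub_cancel_right] using hx.1.2 (n + 1)

theorem deriv_ne_zero (hx : x ∈ NUE F χ) (n : ℤ) : deriv F.f (x n) ≠ 0 :=
  GoodMap.deriv_ne_zero (hx.1.1 n) (hx.2.1 n)

theorem one_le_uPes (hx : x ∈ NUE F χ) : 1 ≤ uPes F.f χ x :=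
  OneDim.one_le_uPes (summable_uTerm hx)

theorem one_le_uPes_fhatI_neg_one (hx : x ∈ NUE F χ) : 1 ≤ uPes F.f χ (fhatI (-1) x) :=
  OneDim.one_le_uPes (summable_uTerm_fhatI_neg_one (summable_uTerm hx) (deriv_ne_zero hx (-1)))

theorem dS_pos (hA : F.SatA) (hx : x ∈ NUE F χ) (n : ℤ) : 0 < F.dS (x n) :=
  hA.dS_pos (hx.1.1 n) (hx.2.1 n) (apply_eq hx n ▸ hx.2.1 (n + 1))

theorem rho_pos (hA : F.SatA) (hx : x ∈ NUE F χ) : 0 < rho F x :=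
  lt_min (dS_pos hA hx _) (lt_min (dS_pos hA hx _) (dS_pos hA hx _))

theorem Qtilde_pos (hA : F.SatA) (hε : 0 < ε) (hx : x ∈ NUE F χ) : 0 < Qtilde F χ ε x := by
  have hu := one_le_uPes hx
  have hu' := one_le_uPes_fhatI_neg_one hx
  have hρ := rho_pos hA hx
  unfold Qtilde
  positivity

theorem Qtilde_le_one (hA : F.SatA) (hε : 0 < ε) (hε₁ : ε ≤ 1) (hx : x ∈ NUE F χ) :
    Qtilde F χ ε x ≤ 1 := by
  have hu := one_le_uPes hx
  have hβ := F.hβ0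
  refine mul_le_one₀ (rpow_le_one hε.le hε₁ (by positivity)) ?_ ((min_le_left _ _).trans
    (rpow_le_one_of_one_le_of_nonpos hu (neg_nonpos.2 (by positivity))))
  have hu' := one_le_uPes_fhatI_neg_one hx
  have hρ := rho_pos hA hx
  positivity

theorem Qeps_le_Qtilde (hA : F.SatA) (hε : 0 < ε) (hx : x ∈ NUE F χ) :
    Qeps F χ ε x ≤ Qtilde F χ ε x :=
  Real.sSup_le (fun _ hq => hq.2) (Qtilde_pos hA hε hx).le

/- Consecutive elements of the grid `I_ε` differ by a factor `e^{ε/3}`. -/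
theorem logClose_Qeps_Qtilde (hA : F.SatA) (hε : 0 < ε) (hε₁ : ε ≤ 1) (hx : x ∈ NUE F χ) :
    LogClose (ε / 3) (Qeps F χ ε x) (Qtilde F χ ε x) := by
  have hpos := Qtilde_pos hA hε hx
  set T := Qtilde F χ ε x with hT
  set s := -(3 * log T) / ε
  have hs0 : 0 ≤ s := by
    have := log_nonpos hpos.le (Qtilde_le_one hA hε hε₁ hx)
    exact div_nonneg (by linarith) hε.le
  have hεs : ε * s = -(3 * log T) := mul_div_cancel₀ _ hε.ne'
  have hmem : exp (-(ε * ⌈s⌉₊) / 3) ∈ {q | q ∈ Ieps ε ∧ q ≤ Qtilde F χ ε x} := by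
    refine ⟨⟨_, rfl⟩, ?_⟩
    rw [← hT, ← le_log_iff_exp_le hpos]
    linarith [mul_le_mul_of_nonneg_left (Nat.le_ceil s) hε.le]
  have hle : exp (-(ε * ⌈s⌉₊) / 3) ≤ Qeps F χ ε x := le_csSup ⟨T, fun q hq => hq.2⟩ hmem
  refine .of_le_exp_mul ((exp_pos _).trans_le hle) hpos ((Qeps_le_Qtilde hA hε hx).trans ?_) ?_
  · exact le_mul_of_one_le_left hpos.le (one_le_exp (by positivity))
  · calc T = exp (log T) := (exp_log hpos).symm
      _ ≤ exp (ε / 3 + -(ε * ⌈s⌉₊) / 3) := by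
        refine exp_le_exp.2 ?_
        linarith [mul_le_mul_of_nonneg_left (Nat.ceil_lt_add_one hs0).le hε.le]
      _ = exp (ε / 3) * exp (-(ε * ⌈s⌉₊) / 3) := exp_add _ _
      _ ≤ exp (ε / 3) * Qeps F χ ε x := by gcongr

end NUE

/-- A lower bound both for `|df|` near `x₀` and for `u(x̂)⁻¹`, of which the size of every
`ε`-chart centred at `x̂` is a high power. -/
def pesinScale (F : GoodMap) (χ : ℝ) (x : ℤ → ℝ) : ℝ :=
  min (rho F x ^ F.a) (uPes F.f χ x)⁻¹

namespace NUE

variable {F : GoodMap} {χ ε y y' : ℝ} {x : ℤ → ℝ}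

theorem pesinScale_pos (hA : F.SatA) (hx : x ∈ NUE F χ) : 0 < pesinScale F χ x :=
  lt_min (rpow_pos_of_pos (rho_pos hA hx) _) (inv_pos.2 (zero_lt_one.trans_le (one_le_uPes hx)))

theorem pesinScale_le_one (hx : x ∈ NUE F χ) : pesinScale F χ x ≤ 1 :=
  (min_le_right _ _).trans (inv_le_one_of_one_le₀ (one_le_uPes hx))

theorem pesinScale_le_rho (hA : F.SatA) (hx : x ∈ NUE F χ) : pesinScale F χ x ≤ rho F x :=
  (min_le_left _ _).trans
    (rpow_le_self_of_le_one (rho_pos hA hx).le (rho_le_one (hx.1.1 0)) F.ha.le)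

theorem Qtilde_le_pesinScale (hA : F.SatA) (hε : 0 < ε) (hx : x ∈ NUE F χ) :
    Qtilde F χ ε x ≤ ε ^ (3 / F.β) * pesinScale F χ x ^ (24 / F.β) := by
  have hβ := F.hβ0
  have ha := F.ha
  have hu := one_le_uPes hx
  have hρ := rho_pos hA hx
  refine mul_le_mul_of_nonneg_left ?_ (by positivity)
  rcases min_choice (rho F x ^ F.a) (uPes F.f χ x)⁻¹ with hmin | hmin
  · refine (min_le_right _ _).trans ?_
    have hpre : uPes F.f χ (fhatI (-1) x) ^ (-(12 / F.β)) ≤ 1 :=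
      rpow_le_one_of_one_le_of_nonpos (one_le_uPes_fhatI_neg_one hx)
        (neg_nonpos.2 (by positivity))
    calc uPes F.f χ (fhatI (-1) x) ^ (-(12 / F.β)) * rho F x ^ (72 * F.a / F.β)
        ≤ rho F x ^ (72 * F.a / F.β) := mul_le_of_le_one_left (by positivity) hpre
      _ ≤ rho F x ^ (F.a * (24 / F.β)) := by
        refine rpow_le_rpow_of_exponent_ge hρ (rho_le_one (hx.1.1 0)) ?_
        rw [mul_div_assoc', mul_comm F.a]
        gcongr
        norm_num
      _ = pesinScale F χ x ^ (24 / F.β) := by rw [pesinScale, hmin, rpow_mul hρ.le]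
  · refine (min_le_left _ _).trans (le_of_eq ?_)
    rw [pesinScale, hmin, inv_rpow (by positivity), rpow_neg (by positivity)]

theorem rpow_rho_lt_radius (hA : F.SatA) (hx : x ∈ NUE F χ) : rho F x ^ F.a < F.r (x 0) := by
  have ha : 0 ≤ F.a := zero_le_one.trans F.ha.le
  have hf : F.f (x 0) = x 1 := apply_eq hx 0
  refine lt_of_le_of_lt (le_min ?_ ?_) (hA (x 0) (hx.1.1 0) (hx.2.1 0) (hf ▸ hx.2.1 1)).1.1
  · exact rpow_le_rpow (rho_pos hA hx).le (rho_le_dS_zero F x) ha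
  · exact rpow_le_rpow (rho_pos hA hx).le (hf ▸ rho_le_dS_one F x) ha

theorem mem_ball_of_abs_sub_le (hA : F.SatA) (hx : x ∈ NUE F χ)
    (hy : |y - x 0| ≤ rho F x ^ F.a) : y ∈ ball (x 0) (2 * F.r (x 0)) := by
  rw [mem_ball, Real.dist_eq]
  linarith [rpow_rho_lt_radius hA hx, rpow_nonneg (rho_pos hA hx).le F.a]

theorem rpow_rho_le_abs_deriv (hA : F.SatA) (hx : x ∈ NUE F χ)
    (hy : |y - x 0| ≤ rho F x ^ F.a) : rho F x ^ F.a ≤ |deriv F.f y| := by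
  obtain ⟨-, -, ⟨hderiv, -⟩, -⟩ :=
    hA (x 0) (hx.1.1 0) (hx.2.1 0) ((apply_eq hx 0).symm ▸ hx.2.1 _)
  exact (rpow_le_rpow (rho_pos hA hx).le (rho_le_dS_zero F x) (zero_le_one.trans F.ha.le)).trans
    (hderiv y (mem_ball_of_abs_sub_le hA hx hy)).1

theorem abs_deriv_sub_deriv_le (hA : F.SatA) (hx : x ∈ NUE F χ)
    (hy : |y - x 0| ≤ rho F x ^ F.a) (hy' : |y' - x 0| ≤ rho F x ^ F.a) :
    |deriv F.f y - deriv F.f y'| ≤ F.K * |y - y'| ^ F.β := by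
  obtain ⟨-, -, -, hholder, -⟩ :=
    hA (x 0) (hx.1.1 0) (hx.2.1 0) ((apply_eq hx 0).symm ▸ hx.2.1 _)
  exact hholder y (mem_ball_of_abs_sub_le hA hx hy) y' (mem_ball_of_abs_sub_le hA hx hy')

end NUE

theorem abs_sub_le_of_mem_chartRange {F : GoodMap} {χ ζ : ℝ} {c : Chart}
    (hζ : ζ ∈ chartRange F χ c) : |ζ - c.x 0| ≤ c.p / uPes F.f χ c.x := by
  obtain ⟨t, ht, rfl⟩ := hζ
  rw [Psi, add_sub_cancel_right, abs_div, abs_of_nonneg (uPes_nonneg _ _ _)]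
  exact div_le_div_of_nonneg_right (abs_le.2 ht) (uPes_nonneg _ _ _)

namespace IsChart

variable {F : GoodMap} {χ ε ζ : ℝ} {c : Chart}

theorem p_le_one (hA : F.SatA) (hε : 0 < ε) (hε₁ : ε ≤ 1) (hc : IsChart F χ ε c) : c.p ≤ 1 :=
  hc.2.2.trans ((NUE.Qeps_le_Qtilde hA hε hc.1).trans (NUE.Qtilde_le_one hA hε hε₁ hc.1))

theorem rpow_p_le (hA : F.SatA) (hε : 0 < ε) (hc : IsChart F χ ε c) :
    c.p ^ F.β ≤ ε ^ 3 * pesinScale F χ c.x ^ 24 := by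
  have hβ := F.hβ0
  have hs := NUE.pesinScale_pos hA hc.1
  have hp : c.p ≤ ε ^ (3 / F.β) * pesinScale F χ c.x ^ (24 / F.β) :=
    hc.2.2.trans ((NUE.Qeps_le_Qtilde hA hε hc.1).trans (NUE.Qtilde_le_pesinScale hA hε hc.1))
  refine (rpow_le_rpow hc.2.1.le hp hβ.le).trans (le_of_eq ?_)
  rw [mul_rpow (by positivity) (by positivity), ← rpow_mul hε.le, ← rpow_mul hs.le,
    div_mul_cancel₀ _ hβ.ne', div_mul_cancel₀ _ hβ.ne']
  norm_cast

theorem rpow_p_le_mul (hA : F.SatA) (hε : 0 < ε) (hc : IsChart F χ ε c) :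
    c.p ^ F.β ≤ ε ^ 3 * pesinScale F χ c.x ^ 4 * pesinScale F χ c.x := by
  refine (hc.rpow_p_le hA hε).trans ?_
  rw [mul_assoc, ← pow_succ]
  gcongr ε ^ 3 * ?_
  exact pow_le_pow_of_le_one (NUE.pesinScale_pos hA hc.1).le (NUE.pesinScale_le_one hc.1)
    (by norm_num)

theorem p_le_rpow (hA : F.SatA) (hε : 0 < ε) (hε₁ : ε ≤ 1) (hc : IsChart F χ ε c) :
    c.p ≤ c.p ^ F.β :=
  self_le_rpow_of_le_one hc.2.1.le (hc.p_le_one hA hε hε₁) F.hβ1.le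

theorem p_le_mul_pesinScale (hA : F.SatA) (hε : 0 < ε) (hε₁ : ε ≤ 1) (hc : IsChart F χ ε c) :
    c.p ≤ ε ^ 3 * pesinScale F χ c.x := by
  refine (hc.p_le_rpow hA hε hε₁).trans ((hc.rpow_p_le hA hε).trans ?_)
  gcongr
  exact pow_le_of_le_one (NUE.pesinScale_pos hA hc.1).le (NUE.pesinScale_le_one hc.1)
    (by norm_num)

theorem p_le_rpow_rho (hA : F.SatA) (hε : 0 < ε) (hε₁ : ε ≤ 1) (hc : IsChart F χ ε c) :
    c.p ≤ rho F c.x ^ F.a :=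
  (hc.p_le_mul_pesinScale hA hε hε₁).trans ((mul_le_of_le_one_left
    (NUE.pesinScale_pos hA hc.1).le (pow_le_one₀ hε.le hε₁)).trans (min_le_left _ _))

theorem p_le_mul_rho (hA : F.SatA) (hε : 0 < ε) (hε₁ : ε ≤ 1) (hc : IsChart F χ ε c) :
    c.p ≤ ε ^ 3 * rho F c.x :=
  (hc.p_le_mul_pesinScale hA hε hε₁).trans
    (mul_le_mul_of_nonneg_left (NUE.pesinScale_le_rho hA hc.1) (by positivity))

theorem p_le_mul_dS_zero (hA : F.SatA) (hε : 0 < ε) (hε₁ : ε ≤ 1) (hc : IsChart F χ ε c) :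
    c.p ≤ ε ^ 3 * F.dS (c.x 0) :=
  (hc.p_le_mul_rho hA hε hε₁).trans
    (mul_le_mul_of_nonneg_left (rho_le_dS_zero F c.x) (by positivity))

theorem abs_sub_le_p (hc : IsChart F χ ε c) (hζ : ζ ∈ chartRange F χ c) : |ζ - c.x 0| ≤ c.p :=
  (abs_sub_le_of_mem_chartRange hζ).trans (div_le_self hc.2.1.le (NUE.one_le_uPes hc.1))

theorem pesinScale_le_abs_deriv (hA : F.SatA) (hε : 0 < ε) (hε₁ : ε ≤ 1)
    (hc : IsChart F χ ε c) (hζ : ζ ∈ chartRange F χ c) :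
    pesinScale F χ c.x ≤ |deriv F.f ζ| :=
  (min_le_left _ _).trans (NUE.rpow_rho_le_abs_deriv hA hc.1
    ((hc.abs_sub_le_p hζ).trans (hc.p_le_rpow_rho hA hε hε₁)))

theorem sq_uPes_div_mul_pow_le_one (hA : F.SatA) (hε : 0 < ε) (hε₁ : ε ≤ 1)
    (hc : IsChart F χ ε c) (hζ : ζ ∈ chartRange F χ c) :
    (uPes F.f χ c.x / |deriv F.f ζ|) ^ 2 * pesinScale F χ c.x ^ 4 ≤ 1 := by
  have hs := NUE.pesinScale_pos hA hc.1
  have hu := zero_lt_one.trans_le (NUE.one_le_uPes hc.1)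
  have hderiv := hc.pesinScale_le_abs_deriv hA hε hε₁ hζ
  have hd := hs.trans_le hderiv
  have hus : uPes F.f χ c.x * pesinScale F χ c.x ≤ 1 :=
    (le_div_iff₀' hu).1 ((min_le_right _ _).trans_eq (one_div _).symm)
  calc (uPes F.f χ c.x / |deriv F.f ζ|) ^ 2 * pesinScale F χ c.x ^ 4
      = (uPes F.f χ c.x * pesinScale F χ c.x) ^ 2 *
          (pesinScale F χ c.x / |deriv F.f ζ|) ^ 2 := by ring
    _ ≤ 1 := mul_le_one₀ (pow_le_one₀ (by positivity) hus) (by positivity)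
        (pow_le_one₀ (by positivity) ((div_le_one hd).2 hderiv))

end IsChart

/-! ### Estimates along an edge -/

/-- The smallness of `ε` required by the comparison of pseudo-orbits. -/
structure SmallParameter (F : GoodMap) (χ ε : ℝ) : Prop where
  pos : 0 < ε
  le_quarter : ε ≤ 1 / 4
  distortion : (1 + exp (2 * χ)) * (8 + 16 * F.K) * ε ^ 2 ≤ 1
  exponent : (336 * F.a / F.β + 1) * ε ≤ ε ^ ((1 : ℝ) / 3)
  cubeRoot : ε ^ ((1 : ℝ) / 3) + 2 * ε ≤ 1 / 4

namespace SmallParameter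

variable {F : GoodMap} {χ ε : ℝ}

theorem le_one (hε : SmallParameter F χ ε) : ε ≤ 1 := hε.le_quarter.trans (by norm_num)

theorem distortion_base (hε : SmallParameter F χ ε) : (8 + 16 * F.K) * ε ^ 2 ≤ 1 := by
  have hK : 0 ≤ (8 + 16 * F.K) * ε ^ 2 := by have := F.hK; positivity
  linarith [hε.distortion, mul_nonneg (exp_pos (2 * χ)).le hK]

theorem distortion_exp (hε : SmallParameter F χ ε) :
    exp (2 * χ) * (8 + 16 * F.K) * ε ^ 3 ≤ ε := by
  have hK : 0 ≤ (8 + 16 * F.K) * ε ^ 2 := by have := F.hK; positivity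
  calc exp (2 * χ) * (8 + 16 * F.K) * ε ^ 3
      = (exp (2 * χ) * (8 + 16 * F.K) * ε ^ 2) * ε := by ring
    _ ≤ 1 * ε := mul_le_mul_of_nonneg_right (by linarith [hε.distortion]) hε.pos.le
    _ = ε := one_mul ε

theorem pow_three_le (hε : SmallParameter F χ ε) : ε ^ 3 ≤ ε / 16 := by
  calc ε ^ 3 = ε ^ 2 * ε := pow_succ ε 2
    _ ≤ (1 / 4) ^ 2 * ε := by
      gcongr
      · exact hε.pos.le
      · exact hε.pos.le
      · exact hε.le_quarter
    _ = ε / 16 := by ring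

theorem exp_le_two (hε : SmallParameter F χ ε) : exp ε ≤ 2 := by
  have habs := abs_of_pos hε.pos
  have := (abs_le.1 (abs_exp_sub_one_le (habs.trans_le hε.le_one))).2
  linarith [hε.le_quarter]

theorem exp_cubeRoot_lt_two (hε : SmallParameter F χ ε) :
    exp (ε ^ ((1 : ℝ) / 3) + 2 * ε) < 2 := by
  have hε₀ := hε.pos
  have hpos : 0 ≤ ε ^ ((1 : ℝ) / 3) + 2 * ε := by positivity
  have habs := abs_of_nonneg hpos
  have hle := hε.cubeRoot
  linarith [(abs_le.1 (abs_exp_sub_one_le (habs.trans_le (by linarith)))).2]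

theorem two_mul_le_sqrt (hε : SmallParameter F χ ε) :
    2 * ε ≤ √ε := by
  rw [le_sqrt' (by linarith [hε.pos])]
  nlinarith [hε.pos, hε.le_quarter]

end SmallParameter

namespace Edge

variable {F : GoodMap} {χ ε ζ : ℝ} {v w : Chart}

theorem abs_sub_add_abs_inv_sub_lt (hA : F.SatA) (hε : 0 < ε) (hε₁ : ε ≤ 1)
    (hE : Edge F χ ε v w) :
    |w.x (-1) - v.x 0| + |(uPes F.f χ (fhatI (-1) w.x))⁻¹ - (uPes F.f χ v.x)⁻¹| < v.p := by
  obtain ⟨hv, -, ⟨-, -, hoverlap⟩, -⟩ := hE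
  have hp : (v.p * v.p) ^ 4 ≤ v.p := by
    rw [← sq, ← pow_mul]
    exact pow_le_of_le_one hv.2.1.le (hv.p_le_one hA hε hε₁) (by norm_num)
  simpa only [fhatI_apply_zero] using hoverlap.trans_le hp

theorem logClose_uPes (hA : F.SatA) (hε : SmallParameter F χ ε) (hE : Edge F χ ε v w) :
    LogClose (2 * (ε ^ 3 * pesinScale F χ v.x ^ 4))
      (uPes F.f χ v.x) (uPes F.f χ (fhatI (-1) w.x)) := by
  have hv : IsChart F χ ε v := hE.1
  have hu : 0 < (uPes F.f χ v.x)⁻¹ := inv_pos.2 (zero_lt_one.trans_le (NUE.one_le_uPes hv.1))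
  have hs := NUE.pesinScale_pos hA hv.1
  suffices h : LogClose (2 * (ε ^ 3 * pesinScale F χ v.x ^ 4))
      (uPes F.f χ v.x)⁻¹ (uPes F.f χ (fhatI (-1) w.x))⁻¹ by
    simpa only [inv_inv] using h.inv
  refine .of_abs_sub_le hu ?_ ?_
  · have := pow_le_one₀ (n := 4) hs.le (NUE.pesinScale_le_one hv.1)
    have hpos := pow_pos hε.pos 3
    nlinarith [hε.pow_three_le, hε.le_quarter]
  · have hsum := hE.abs_sub_add_abs_inv_sub_lt hA hε.pos hε.le_one
    rw [abs_sub_comm]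
    calc |(uPes F.f χ (fhatI (-1) w.x))⁻¹ - (uPes F.f χ v.x)⁻¹| ≤ v.p := by
          linarith [abs_nonneg (w.x (-1) - v.x 0)]
      _ ≤ ε ^ 3 * pesinScale F χ v.x ^ 4 * pesinScale F χ v.x :=
          (hv.p_le_rpow hA hε.pos hε.le_one).trans (hv.rpow_p_le_mul hA hε.pos)
      _ ≤ ε ^ 3 * pesinScale F χ v.x ^ 4 * (uPes F.f χ v.x)⁻¹ :=
          mul_le_mul_of_nonneg_left (min_le_right _ _)
            (mul_nonneg (pow_pos hε.pos 3).le (pow_pos hs 4).le)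

theorem abs_deriv_sub_deriv_le (hA : F.SatA) (hε : 0 < ε) (hε₁ : ε ≤ 1) (hE : Edge F χ ε v w)
    (hζ : ζ ∈ chartRange F χ v) :
    |deriv F.f ζ - deriv F.f (w.x (-1))| ≤ 2 * F.K * v.p ^ F.β := by
  have hv : IsChart F χ ε v := hE.1
  have hsum := hE.abs_sub_add_abs_inv_sub_lt hA hε hε₁
  have hζ₀ := hv.abs_sub_le_p hζ
  have hξ₀ : |w.x (-1) - v.x 0| ≤ v.p := (le_add_of_nonneg_right (abs_nonneg _)).trans hsum.le
  have hpρ := hv.p_le_rpow_rho hA hε hε₁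
  have hK : 0 ≤ F.K := zero_le_one.trans F.hK.le
  have hp := hv.2.1
  have hdist : |ζ - w.x (-1)| ≤ 2 * v.p := by
    rw [abs_sub_comm (w.x (-1))] at hξ₀
    linarith [abs_sub_le ζ (v.x 0) (w.x (-1))]
  calc |deriv F.f ζ - deriv F.f (w.x (-1))| ≤ F.K * |ζ - w.x (-1)| ^ F.β :=
        NUE.abs_deriv_sub_deriv_le hA hv.1 (hζ₀.trans hpρ) (hξ₀.trans hpρ)
    _ ≤ F.K * (2 * v.p) ^ F.β := by
        gcongr
        exact F.hβ0.le
    _ = 2 ^ F.β * F.K * v.p ^ F.β := by rw [mul_rpow zero_le_two hp.le]; ring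
    _ ≤ 2 * F.K * v.p ^ F.β := by
        gcongr
        exact rpow_le_self_of_one_le one_le_two F.hβ1.le

theorem logClose_abs_deriv (hA : F.SatA) (hε : SmallParameter F χ ε) (hE : Edge F χ ε v w)
    (hζ : ζ ∈ chartRange F χ v) :
    LogClose (2 * (2 * F.K * (ε ^ 3 * pesinScale F χ v.x ^ 4)))
      |deriv F.f ζ| |deriv F.f (w.x (-1))| := by
  have hv : IsChart F χ ε v := hE.1
  have hs := NUE.pesinScale_pos hA hv.1
  have hK : 0 ≤ F.K := zero_le_one.trans F.hK.le
  have hε₀ := hε.pos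
  have hderiv := hv.pesinScale_le_abs_deriv hA hε.pos hε.le_one hζ
  refine .of_abs_sub_le (hs.trans_le hderiv) ?_ ?_
  · have hpow : ε ^ 3 * pesinScale F χ v.x ^ 4 ≤ ε ^ 2 :=
      (mul_le_of_le_one_right (by positivity)
        (pow_le_one₀ hs.le (NUE.pesinScale_le_one hv.1))).trans
          (pow_le_pow_of_le_one hε₀.le hε.le_one (by norm_num))
    calc 2 * F.K * (ε ^ 3 * pesinScale F χ v.x ^ 4) ≤ 2 * F.K * ε ^ 2 := by gcongr
      _ ≤ 1 / 2 := by nlinarith [hε.distortion_base]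
  · calc |(|deriv F.f ζ| - |deriv F.f (w.x (-1))|)| ≤ |deriv F.f ζ - deriv F.f (w.x (-1))| :=
          abs_abs_sub_abs_le _ _
      _ ≤ 2 * F.K * v.p ^ F.β := hE.abs_deriv_sub_deriv_le hA hε.pos hε.le_one hζ
      _ ≤ 2 * F.K * (ε ^ 3 * pesinScale F χ v.x ^ 4 * |deriv F.f ζ|) := by
          gcongr
          exact (hv.rpow_p_le_mul hA hε.pos).trans (by gcongr)
      _ = 2 * F.K * (ε ^ 3 * pesinScale F χ v.x ^ 4) * |deriv F.f ζ| := by ring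

/- `log |u / f'|` is determined by the chart up to `O(ε³ s⁴)` with `s = pesinScale`, while
`(u / |f'|)²` is at most `s⁻⁴`; the errors therefore compensate. -/
theorem abs_pesinCoeff_mul_sq_sub_le (hA : F.SatA) (hε : SmallParameter F χ ε)
    (hE : Edge F χ ε v w) (hζ : ζ ∈ chartRange F χ v) :
    |pesinCoeff F.f χ ζ * uPes F.f χ v.x ^ 2 - (uPes F.f χ w.x ^ 2 - 1)| ≤ ε := by
  have hv : IsChart F χ ε v := hE.1
  have hK := F.hK
  have hε₀ := hε.pos
  set s := pesinScale F χ v.x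
  set m := uPes F.f χ v.x / |deriv F.f ζ| with hm
  set m' := uPes F.f χ (fhatI (-1) w.x) / |deriv F.f (w.x (-1))| with hm'
  have hclose : LogClose ((4 + 8 * F.K) * ε ^ 3 * s ^ 4) (m' ^ 2) (m ^ 2) :=
    ((hE.logClose_uPes hA hε).div (hE.logClose_abs_deriv hA hε hζ)).sq.symm.mono (by
      simp only [s]
      linarith)
  have hs₁ : s ^ 4 ≤ 1 :=
    pow_le_one₀ (NUE.pesinScale_pos hA hv.1).le (NUE.pesinScale_le_one hv.1)
  have hsmall : (4 + 8 * F.K) * ε ^ 3 * s ^ 4 ≤ 1 := by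
    refine mul_le_one₀ ?_ (by positivity) hs₁
    nlinarith [hε.distortion_base, hε.le_one, pow_pos hε₀ 2]
  have hsq : |m' ^ 2 - m ^ 2| ≤ (8 + 16 * F.K) * ε ^ 3 := by
    calc |m' ^ 2 - m ^ 2| ≤ 2 * ((4 + 8 * F.K) * ε ^ 3 * s ^ 4) * m ^ 2 :=
          hclose.abs_sub_le hsmall
      _ = (8 + 16 * F.K) * ε ^ 3 * (m ^ 2 * s ^ 4) := by ring
      _ ≤ (8 + 16 * F.K) * ε ^ 3 :=
          mul_le_of_le_one_right (by positivity)
            (hv.sq_uPes_div_mul_pow_le_one hA hε₀ hε.le_one hζ)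
  have hu : uPes F.f χ w.x ^ 2 - 1 = exp (2 * χ) * m' ^ 2 := by
    rw [uPes_sq_eq_one_add (NUE.summable_uTerm hE.2.1.1), pesinCoeff, hm', div_pow, sq_abs]
    ring
  have hv' : pesinCoeff F.f χ ζ * uPes F.f χ v.x ^ 2 = exp (2 * χ) * m ^ 2 := by
    rw [pesinCoeff, hm, div_pow, sq_abs]
    ring
  calc |pesinCoeff F.f χ ζ * uPes F.f χ v.x ^ 2 - (uPes F.f χ w.x ^ 2 - 1)|
      = exp (2 * χ) * |m' ^ 2 - m ^ 2| := by
        rw [hu, hv', ← mul_sub, abs_mul, abs_of_pos (exp_pos _), abs_sub_comm]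
    _ ≤ exp (2 * χ) * ((8 + 16 * F.K) * ε ^ 3) := by gcongr
    _ ≤ ε := (mul_assoc _ _ _).symm.trans_le hε.distortion_exp

end Edge

namespace SmallParameter

variable {F : GoodMap} {χ ε x y : ℝ}

theorem logClose_dS (hε : SmallParameter F χ ε) (hx : 0 < F.dS x)
    (hxy : |x - y| ≤ 4 * ε ^ 3 * F.dS x) : LogClose ε (F.dS x) (F.dS y) := by
  have hε₁ := hε.le_quarter
  have hε₀ := hε.pos
  refine (LogClose.of_abs_sub_le (θ := ε / 2) hx (by linarith)
    (((F.abs_dS_sub_dS_le x y).trans hxy).trans ?_)).mono (by linarith)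
  gcongr
  linarith [hε.pow_three_le]

end SmallParameter

section SingularSet

variable {F : GoodMap} {χ ε ζ : ℝ} {c v w : Chart}

theorem IsChart.logClose_dS_zero (hA : F.SatA) (hε : SmallParameter F χ ε)
    (hc : IsChart F χ ε c) (hζ : ζ ∈ chartRange F χ c) :
    LogClose ε (F.dS (c.x 0)) (F.dS ζ) := by
  have hd := NUE.dS_pos hA hc.1 0
  have hε₀ := hε.pos
  refine hε.logClose_dS hd ?_
  rw [abs_sub_comm]
  calc |ζ - c.x 0| ≤ ε ^ 3 * F.dS (c.x 0) :=
        (hc.abs_sub_le_p hζ).trans (hc.p_le_mul_dS_zero hA hε.pos hε.le_one)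
    _ ≤ 4 * ε ^ 3 * F.dS (c.x 0) := by
      gcongr
      linarith [pow_pos hε₀ 3]

theorem Edge.logClose_dS_neg_one (hA : F.SatA) (hε : SmallParameter F χ ε)
    (hE : Edge F χ ε v w) (hζ : ζ ∈ chartRange F χ v) :
    LogClose (2 * ε) (F.dS (w.x (-1))) (F.dS ζ) := by
  have hv : IsChart F χ ε v := hE.1
  have hd := NUE.dS_pos hA hv.1 0
  have hε₀ := hε.pos
  have hcentre : LogClose ε (F.dS (v.x 0)) (F.dS (w.x (-1))) := by
    refine hε.logClose_dS hd ?_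
    rw [abs_sub_comm]
    calc |w.x (-1) - v.x 0| ≤ v.p := (le_add_of_nonneg_right (abs_nonneg _)).trans
          (hE.abs_sub_add_abs_inv_sub_lt hA hε.pos hε.le_one).le
      _ ≤ ε ^ 3 * F.dS (v.x 0) := hv.p_le_mul_dS_zero hA hε.pos hε.le_one
      _ ≤ 4 * ε ^ 3 * F.dS (v.x 0) := by
        gcongr
        linarith [pow_pos hε₀ 3]
  exact (hcentre.symm.trans (hv.logClose_dS_zero hA hε hζ)).mono (two_mul ε).ge

theorem Edge.logClose_dS_one (hA : F.SatA) (hε : SmallParameter F χ ε)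
    (hE : Edge F χ ε v w) (hζ : ζ ∈ chartRange F χ w) :
    LogClose ε (F.dS (v.x 1)) (F.dS ζ) := by
  obtain ⟨hv, hw, -, hforward, -, -, hsize⟩ := hE
  have hε₀ := hε.pos
  refine hε.logClose_dS (NUE.dS_pos hA hv.1 1) ?_
  have hwv : w.p ≤ 2 * v.p := by
    rw [hsize]
    exact (min_le_left _ _).trans (mul_le_mul_of_nonneg_right hε.exp_le_two hv.2.1.le)
  have hζw := hw.abs_sub_le_p hζ
  rw [abs_sub_comm] at hζw
  calc |v.x 1 - ζ| ≤ 4 * v.p := by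
        linarith [abs_sub_le (v.x 1) (w.x 0) ζ, hv.2.1]
    _ ≤ 4 * (ε ^ 3 * rho F v.x) := by
      gcongr
      exact hv.p_le_mul_rho hA hε.pos hε.le_one
    _ ≤ 4 * (ε ^ 3 * F.dS (v.x 1)) := by
      gcongr
      exact rho_le_dS_one F v.x
    _ = 4 * ε ^ 3 * F.dS (v.x 1) := by ring

end SingularSet

/-! ### Shadowing pseudo-orbits -/

namespace IsGPO

variable {F : GoodMap} {χ ε : ℝ} {v : ℤ → Chart} {z : ℤ → ℝ}

theorem isChart (hv : IsGPO F χ ε v) (n : ℤ) : IsChart F χ ε (v n) := (hv n).1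

theorem edge_sub_one (hv : IsGPO F χ ε v) (n : ℤ) : Edge F χ ε (v (n - 1)) (v n) := by
  simpa only [sub_add_cancel] using hv (n - 1)

theorem uPes_pos (hv : IsGPO F χ ε v) (n : ℤ) : 0 < uPes F.f χ (v n).x :=
  zero_lt_one.trans_le (NUE.one_le_uPes (hv.isChart n).1)

theorem abs_uPes_sq_sub_mul_uPes_sq_le (hA : F.SatA) (hε : SmallParameter F χ ε)
    (hv : IsGPO F χ ε v) (hz : Shadows F χ v z) (n : ℤ) :
    |uPes F.f χ (v n).x ^ 2 -
      (1 + pesinCoeff F.f χ (z (n - 1)) * uPes F.f χ (v (n - 1)).x ^ 2)| ≤ ε := by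
  have h := (hv.edge_sub_one n).abs_pesinCoeff_mul_sq_sub_le hA hε (hz.2 (n - 1))
  rwa [abs_sub_comm, sub_sub] at h

theorem logClose_uPes (hA : F.SatA) (hε : SmallParameter F χ ε) (hv : IsGPO F χ ε v)
    (hrec : PastRecurrent v) (hz : Shadows F χ v z) (n : ℤ) :
    LogClose ε (uPes F.f χ (v n).x) (uPes F.f χ (fhatI n z)) := by
  have hε₀ := hε.pos
  have hε₁ := hε.le_quarter
  have hX₀ (k : ℤ) : 0 < uPes F.f χ (v k).x ^ 2 := pow_pos (hv.uPes_pos k) 2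
  have hX (k : ℤ) := abs_le.1 (hv.abs_uPes_sq_sub_mul_uPes_sq_le hA hε hz k)
  have hsuper (k : ℤ) : 1 - ε + pesinCoeff F.f χ (z (k - 1)) * uPes F.f χ (v (k - 1)).x ^ 2
      ≤ uPes F.f χ (v k).x ^ 2 := by linarith [(hX k).1]
  have hsub (k : ℤ) : uPes F.f χ (v k).x ^ 2
      ≤ 1 + ε + pesinCoeff F.f χ (z (k - 1)) * uPes F.f χ (v (k - 1)).x ^ 2 := by
    linarith [(hX k).2]
  have hsum := summable_uTerm_of_supersolution (X := fun k => uPes F.f χ (v k).x ^ 2)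
    (by linarith) (fun k => (hX₀ k).le) hsuper
  have hlow : (1 - ε) * uPes F.f χ (fhatI n z) ^ 2 ≤ uPes F.f χ (v n).x ^ 2 :=
    mul_uPes_sq_le_of_supersolution (X := fun k => uPes F.f χ (v k).x ^ 2)
      (by linarith) (fun k => (hX₀ k).le) hsuper n
  have hupp : uPes F.f χ (v n).x ^ 2 ≤ (1 + ε) * uPes F.f χ (fhatI n z) ^ 2 :=
    le_mul_uPes_sq_of_subsolution hsum (by linarith) hX₀ hsub
      (hrec.comp fun c => uPes F.f χ c.x ^ 2) n
  have hU : 0 < uPes F.f χ (fhatI n z) := zero_lt_one.trans_le (one_le_uPes (hsum n))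
  have hsq : LogClose (2 * ε) (uPes F.f χ (fhatI n z) ^ 2) (uPes F.f χ (v n).x ^ 2) :=
    .of_abs_sub_le (pow_pos hU 2) (by linarith) (abs_le.2 ⟨by linarith, by linarith⟩)
  exact (hsq.of_sq hU (hv.uPes_pos n)).symm

theorem logClose_uPes_fhatI_neg_one (hA : F.SatA) (hε : SmallParameter F χ ε)
    (hv : IsGPO F χ ε v) (hrec : PastRecurrent v) (hz : Shadows F χ v z) (n : ℤ) :
    LogClose (2 * ε) (uPes F.f χ (fhatI (-1) (v n).x)) (uPes F.f χ (fhatI (n - 1) z)) := by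
  refine (((hv.edge_sub_one n).logClose_uPes hA hε).symm.trans
    (hv.logClose_uPes hA hε hrec hz (n - 1))).mono ?_
  have hx := (hv.isChart (n - 1)).1
  have hpow : ε ^ 3 * pesinScale F χ (v (n - 1)).x ^ 4 ≤ ε ^ 3 :=
    mul_le_of_le_one_right (pow_pos hε.pos 3).le
      (pow_le_one₀ (NUE.pesinScale_pos hA hx).le (NUE.pesinScale_le_one hx))
  linarith [hε.pow_three_le, hε.pos]

theorem logClose_rho (hA : F.SatA) (hε : SmallParameter F χ ε) (hv : IsGPO F χ ε v)
    (hz : Shadows F χ v z) (n : ℤ) : LogClose (2 * ε) (rho F (v n).x) (rho F (fhatI n z)) := by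
  have hε₀ : ε ≤ 2 * ε := by linarith [hε.pos]
  rw [rho, rho, fhatI_apply_neg_one, fhatI_apply_zero, fhatI_apply_one]
  exact ((hv.edge_sub_one n).logClose_dS_neg_one hA hε (hz.2 (n - 1))).min
    ((((hv.isChart n).logClose_dS_zero hA hε (hz.2 n)).mono hε₀).min
      (((hv n).logClose_dS_one hA hε (hz.2 (n + 1))).mono hε₀))

theorem logClose_Qtilde (hA : F.SatA) (hε : SmallParameter F χ ε) (hv : IsGPO F χ ε v)
    (hrec : PastRecurrent v) (hz : Shadows F χ v z) (n : ℤ) :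
    LogClose (168 * F.a / F.β * ε) (Qtilde F χ ε (v n).x) (Qtilde F χ ε (fhatI n z)) := by
  have hβ := F.hβ0
  have ha := F.ha
  have hε₀ := hε.pos
  have haε : ε ≤ F.a * ε := le_mul_of_one_le_left hε₀.le ha.le
  have hu := (hv.logClose_uPes hA hε hrec hz n).rpow (-(24 / F.β))
  have hpre := (hv.logClose_uPes_fhatI_neg_one hA hε hrec hz n).rpow (-(12 / F.β))
  have hρ := (hv.logClose_rho hA hε hz n).rpow (72 * F.a / F.β)
  rw [abs_neg, abs_of_pos (by positivity)] at hu hpre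
  rw [abs_of_pos (by positivity)] at hρ
  rw [Qtilde, Qtilde, fhatI_neg_one_fhatI]
  refine ((hu.mono ?_).min ((hpre.mul hρ).mono ?_)).const_mul (by positivity)
  · rw [div_mul_eq_mul_div, div_mul_eq_mul_div]
    gcongr ?_ / _
    linarith
  · rw [div_mul_eq_mul_div, div_mul_eq_mul_div, div_mul_eq_mul_div, ← add_div]
    gcongr ?_ / _
    linarith

end IsGPO

namespace IsGPO

variable {F : GoodMap} {χ ε L : ℝ} {v w : ℤ → Chart} {z : ℤ → ℝ}

theorem logClose_uPes_uPes (hA : F.SatA) (hε : SmallParameter F χ ε) (hv : IsGPO F χ ε v)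
    (hw : IsGPO F χ ε w) (hrv : PastRecurrent v) (hrw : PastRecurrent w)
    (hzv : Shadows F χ v z) (hzw : Shadows F χ w z) (n : ℤ) :
    LogClose (2 * ε) (uPes F.f χ (v n).x) (uPes F.f χ (w n).x) :=
  ((hv.logClose_uPes hA hε hrv hzv n).trans (hw.logClose_uPes hA hε hrw hzw n).symm).mono
    (two_mul ε).ge

theorem logClose_Qeps_Qeps (hA : F.SatA) (hε : SmallParameter F χ ε) (hv : IsGPO F χ ε v)
    (hw : IsGPO F χ ε w) (hrv : PastRecurrent v) (hrw : PastRecurrent w)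
    (hzv : Shadows F χ v z) (hzw : Shadows F χ w z) (n : ℤ) :
    LogClose (ε ^ ((1 : ℝ) / 3)) (Qeps F χ ε (v n).x) (Qeps F χ ε (w n).x) := by
  have htilde := (hv.logClose_Qtilde hA hε hrv hzv n).trans
    (hw.logClose_Qtilde hA hε hrw hzw n).symm
  have hgridv := NUE.logClose_Qeps_Qtilde hA hε.pos hε.le_one (hv.isChart n).1
  have hgridw := NUE.logClose_Qeps_Qtilde hA hε.pos hε.le_one (hw.isChart n).1
  refine ((hgridv.trans htilde).trans hgridw.symm).mono ?_
  calc ε / 3 + (168 * F.a / F.β * ε + 168 * F.a / F.β * ε) + ε / 3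
      = (336 * F.a / F.β + 1) * ε - ε / 3 := by ring
    _ ≤ ε ^ ((1 : ℝ) / 3) := by linarith [hε.exponent, hε.pos]

theorem p_eq_min (hv : IsGPO F χ ε v) (n : ℤ) :
    (v n).p = min (exp ε * (v (n - 1)).p) (deltaEps ε * Qeps F χ ε (v n).x) :=
  let ⟨_, _, _, _, _, _, hp⟩ := hv.edge_sub_one n
  hp

theorem p_le_mul_p (hε : 0 < ε) (hv : IsGPO F χ ε v) (hw : IsGPO F χ ε w)
    (hrec : PastRecurrent v) (hL : 0 ≤ L)
    (hQ : ∀ n, Qeps F χ ε (w n).x ≤ L * Qeps F χ ε (v n).x) (n : ℤ) :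
    (w n).p ≤ L * (v n).p := by
  refine le_mul_of_eq_min (one_lt_exp_iff.2 hε) hL (fun k => (hv.isChart k).2.1) hv.p_eq_min
    (hrec.comp Chart.p) hw.p_eq_min (fun k => ?_) n
  rw [mul_left_comm]
  exact mul_le_mul_of_nonneg_left (hQ k) (exp_pos _).le

theorem logClose_p_p (hA : F.SatA) (hε : SmallParameter F χ ε) (hv : IsGPO F χ ε v)
    (hw : IsGPO F χ ε w) (hrv : PastRecurrent v) (hrw : PastRecurrent w)
    (hzv : Shadows F χ v z) (hzw : Shadows F χ w z) (n : ℤ) :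
    LogClose (ε ^ ((1 : ℝ) / 3)) (v n).p (w n).p := by
  have hQ := hv.logClose_Qeps_Qeps hA hε hw hrv hrw hzv hzw
  exact .of_le_exp_mul (hv.isChart n).2.1 (hw.isChart n).2.1
    (hw.p_le_mul_p hε.pos hv hrw (exp_pos _).le (fun k => (hQ k).le_exp_mul) n)
    (hv.p_le_mul_p hε.pos hw hrv (exp_pos _).le (fun k => (hQ k).symm.le_exp_mul) n)

end IsGPO

section ChartChange

variable {F : GoodMap} {χ ε θ θ' ζ : ℝ} {c d : Chart}

theorem uPes_mul_Psi_sub (f : ℝ → ℝ) (χ : ℝ) (x y : ℤ → ℝ) (t : ℝ) :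
    uPes f χ y * (Psi f χ x t - y 0) =
      t + (uPes f χ y / uPes f χ x - 1) * t + uPes f χ y * (x 0 - y 0) := by
  unfold Psi
  ring

theorem abs_sub_le_two_mul_max (hc : IsChart F χ ε c) (hd : IsChart F χ ε d)
    (hζc : ζ ∈ chartRange F χ c) (hζd : ζ ∈ chartRange F χ d) :
    |c.x 0 - d.x 0| ≤ 2 * max c.p d.p := by
  have hcζ := hc.abs_sub_le_p hζc
  have hdζ := hd.abs_sub_le_p hζd
  rw [abs_sub_comm] at hcζ
  linarith [abs_sub_le (c.x 0) ζ (d.x 0), le_max_left c.p d.p, le_max_right c.p d.p]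

theorem uPes_mul_abs_sub_le (hζc : ζ ∈ chartRange F χ c) (hζd : ζ ∈ chartRange F χ d)
    (hu : LogClose θ (uPes F.f χ c.x) (uPes F.f χ d.x)) (hp : LogClose θ' c.p d.p) :
    |uPes F.f χ d.x * (c.x 0 - d.x 0)| ≤ (exp (θ' + θ) + 1) * d.p := by
  have hud := hu.right_pos
  have hcζ := abs_sub_le_of_mem_chartRange hζc
  have hdζ := abs_sub_le_of_mem_chartRange hζd
  rw [abs_sub_comm] at hcζ
  calc |uPes F.f χ d.x * (c.x 0 - d.x 0)|
      = uPes F.f χ d.x * |c.x 0 - d.x 0| := by rw [abs_mul, abs_of_pos hud]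
    _ ≤ uPes F.f χ d.x * (c.p / uPes F.f χ c.x + d.p / uPes F.f χ d.x) := by
      gcongr
      linarith [abs_sub_le (c.x 0) ζ (d.x 0)]
    _ = (c.p / uPes F.f χ c.x) / (d.p / uPes F.f χ d.x) * d.p + d.p := by
      have := hp.right_pos.ne'
      have := hu.left_pos.ne'
      field_simp
    _ ≤ exp (θ' + θ) * d.p + d.p := by
      gcongr
      · exact hp.right_pos.le
      · exact (hp.div hu).div_le_exp
    _ = (exp (θ' + θ) + 1) * d.p := by ring

end ChartChange

theorem eventually_smallParameter (F : GoodMap) (χ : ℝ) :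
    ∀ᶠ ε in 𝓝[>] (0 : ℝ), SmallParameter F χ ε := by
  have htendsto {h : ℝ → ℝ} (hh : Continuous h) (h₀ : h 0 = 0) : Tendsto h (𝓝[>] 0) (𝓝 0) :=
    (hh.tendsto' 0 0 h₀).mono_left nhdsWithin_le_nhds
  have hdistortion := htendsto
    (h := fun ε => (1 + exp (2 * χ)) * (8 + 16 * F.K) * ε ^ 2) (by fun_prop) (by simp)
  have hexponent := htendsto (h := fun ε => (336 * F.a / F.β + 1) * ε ^ ((2 : ℝ) / 3))
    (by fun_prop (disch := norm_num)) (by norm_num)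
  have hroot := htendsto (h := fun ε => ε ^ ((1 : ℝ) / 3) + 2 * ε)
    (by fun_prop (disch := norm_num)) (by norm_num)
  filter_upwards [self_mem_nhdsWithin,
    (htendsto continuous_id rfl).eventually_le_const (by norm_num : (0 : ℝ) < 1 / 4),
    hdistortion.eventually_le_const one_pos, hexponent.eventually_le_const one_pos,
    hroot.eventually_le_const (by norm_num : (0 : ℝ) < 1 / 4)]
    with ε (hε : 0 < ε) hquarter hdist hexp hcube
  refine ⟨hε, hquarter, hdist, ?_, hcube⟩
  calc (336 * F.a / F.β + 1) * ε
      = (336 * F.a / F.β + 1) * ε ^ ((2 : ℝ) / 3) * ε ^ ((1 : ℝ) / 3) := by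
        rw [mul_assoc, ← rpow_add hε]
        norm_num
    _ ≤ 1 * ε ^ ((1 : ℝ) / 3) := by gcongr
    _ = ε ^ ((1 : ℝ) / 3) := one_mul _

theorem exists_smallParameter (F : GoodMap) (χ : ℝ) :
    ∃ ε₀ > 0, ∀ ε : ℝ, 0 < ε → ε < ε₀ → SmallParameter F χ ε := by
  obtain ⟨ε₀, hε₀, h⟩ := mem_nhdsGT_iff_exists_Ioo_subset.1 (eventually_smallParameter F χ)
  exact ⟨ε₀, hε₀, fun ε hε hlt => h ⟨hε, hlt⟩⟩

theorem inverse_theorem_general (F : GoodMap) (hA : F.SatA) (χ : ℝ) :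
    ∃ ε₀ > 0, ∀ ε : ℝ, 0 < ε → ε < ε₀ → ∀ v w : ℤ → Chart,
      IsGPO F χ ε v → IsGPO F χ ε w → PastRecurrent v → PastRecurrent w →
      ∀ z : ℤ → ℝ, Shadows F χ v z → Shadows F χ w z → ∀ n : ℤ,
        |(v n).x 0 - (w n).x 0| ≤ 2 * max (v n).p (w n).p ∧
        (exp (-(2 * √ε)) ≤ uPes F.f χ (v n).x / uPes F.f χ (w n).x ∧
          uPes F.f χ (v n).x / uPes F.f χ (w n).x ≤ exp (2 * √ε)) ∧
        (exp (-(ε ^ ((1 : ℝ) / 3))) ≤ Qeps F χ ε (v n).x / Qeps F χ ε (w n).x ∧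
          Qeps F χ ε (v n).x / Qeps F χ ε (w n).x ≤ exp (ε ^ ((1 : ℝ) / 3))) ∧
        (exp (-(ε ^ ((1 : ℝ) / 3))) ≤ (v n).p / (w n).p ∧
          (v n).p / (w n).p ≤ exp (ε ^ ((1 : ℝ) / 3))) ∧
        ∃ δ c : ℝ, |δ| < 3 * (w n).p ∧ |c| < 4 * √ε ∧
          ∀ t : ℝ, uPes F.f χ (w n).x * (Psi F.f χ (v n).x t - (w n).x 0) = t + c * t + δ := by
  obtain ⟨ε₀, hε₀, hsmall⟩ := exists_smallParameter F χ
  refine ⟨ε₀, hε₀, fun ε hε hlt v w hv hw hrv hrw z hzv hzw n => ?_⟩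
  replace hε := hsmall ε hε hlt
  have hsqrt := hε.two_mul_le_sqrt
  have hsqrt₀ := sqrt_pos.2 hε.pos
  have hu := hv.logClose_uPes_uPes hA hε hw hrv hrw hzv hzw n
  have hu' := hu.mono (hsqrt.trans (by linarith) : 2 * ε ≤ 2 * √ε)
  have hQ := hv.logClose_Qeps_Qeps hA hε hw hrv hrw hzv hzw n
  have hp := hv.logClose_p_p hA hε hw hrv hrw hzv hzw n
  refine ⟨abs_sub_le_two_mul_max (hv.isChart n) (hw.isChart n) (hzv.2 n) (hzw.2 n),
    ⟨hu'.exp_neg_le_div, hu'.div_le_exp⟩, ⟨hQ.exp_neg_le_div, hQ.div_le_exp⟩,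
    ⟨hp.exp_neg_le_div, hp.div_le_exp⟩, _, _, ?_, ?_, uPes_mul_Psi_sub F.f χ (v n).x (w n).x⟩
  · refine (uPes_mul_abs_sub_le (hzv.2 n) (hzw.2 n) hu hp).trans_lt
      (mul_lt_mul_of_pos_right ?_ hp.right_pos)
    linarith [hε.exp_cubeRoot_lt_two]
  · refine (hu.symm.abs_div_sub_one_le ?_).trans_lt ?_ <;> linarith [hε.le_quarter]

/-- the inverse theorem (Theorem 4.1). -/
theorem inverse_theorem (F : GoodMap) (hA : F.SatA) (χ : ℝ) (hχ : 0 < χ) :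
    ∃ ε₀ > 0, ∀ ε : ℝ, 0 < ε → ε < ε₀ →
      ∀ A : Set Chart, A.Countable → (∀ c ∈ A, IsChart F χ ε c) →
      -- discreteness
      (∀ t : ℝ, 0 < t → {c ∈ A | t < c.p}.Finite) →
      -- relevance
      (∀ c ∈ A, ∃ w : ℤ → Chart, (∀ n, w n ∈ A) ∧ IsGPO F χ ε w ∧ w 0 = c ∧
        ∃ x ∈ NUEstar F χ, Shadows F χ w x) →
      ∀ v w : ℤ → Chart, (∀ n, v n ∈ A) → (∀ n, w n ∈ A) →
        IsGPO F χ ε v → IsGPO F χ ε w → Recurrent v → Recurrent w →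
        ∀ z : ℤ → ℝ, Shadows F χ v z → Shadows F χ w z →
        ∀ n : ℤ,
          -- (1)
          |(v n).x 0 - (w n).x 0| ≤ 2 * max (v n).p (w n).p ∧
          -- (2)
          (Real.exp (-(2 * Real.sqrt ε)) ≤ uPes F.f χ (v n).x / uPes F.f χ (w n).x ∧
            uPes F.f χ (v n).x / uPes F.f χ (w n).x ≤ Real.exp (2 * Real.sqrt ε)) ∧
          -- (3)
          (Real.exp (-(ε ^ ((1:ℝ)/3))) ≤ Qeps F χ ε (v n).x / Qeps F χ ε (w n).x ∧
            Qeps F χ ε (v n).x / Qeps F χ ε (w n).x ≤ Real.exp (ε ^ ((1:ℝ)/3))) ∧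
          -- (4)
          (Real.exp (-(ε ^ ((1:ℝ)/3))) ≤ (v n).p / (w n).p ∧
            (v n).p / (w n).p ≤ Real.exp (ε ^ ((1:ℝ)/3))) ∧
          -- (5)
          (∃ δ c : ℝ, |δ| < 3 * (w n).p ∧ |c| < 4 * Real.sqrt ε ∧
            ∀ t ∈ Set.Icc (-(10 * Qeps F χ ε (v n).x)) (10 * Qeps F χ ε (v n).x),
              uPes F.f χ (w n).x * (Psi F.f χ (v n).x t - (w n).x 0) = t + c * t + δ) := by
  obtain ⟨ε₀, hε₀, h⟩ := inverse_theorem_general F hA χ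
  refine ⟨ε₀, hε₀, fun ε hε hlt _ _ _ _ _ v w _ _ hv hw hrv hrw z hzv hzw n => ?_⟩
  obtain ⟨hcentre, hu, hQ, hp, δ, c, hδ, hc, hchange⟩ :=
    h ε hε hlt v w hv hw hrv.pastRecurrent hrw.pastRecurrent z hzv hzw n
  exact ⟨hcentre, hu, hQ, hp, δ, c, hδ, hc, fun t _ => hchange t⟩

end OneDim
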